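/- arXiv:1808.05299 — 4 statements merged into one kernel-verified Lean document; each statement's English description precedes it below -/
import Mathlib

section
/- The set (F′)^δ = {f ∈ F′ : δ(f) = 0} is a finitely generated module over the ring S^δ = ker δ_S (acting via the S-module structure of F′). -/
open MvPolynomial

namespace Stmt7

/-- Index type for `{1, …, 2d}`: `(i, 0)` stands for `2i-1` and `(i, 1)` for `2i`. -/
abbrev ι (d : ℕ) : Type := Fin d × Fin 2

/-- The free unital associative algebra `P = K⟨x_1, …, x_{2d}⟩`. -/
abbrev P (K : Type) [Field K] (d : ℕ) : Type := FreeAlgebra K (ι d)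

/-- The relation whose `RingQuot` is the free metabelian associative algebra
`F = P/T`, `T` being the two-sided ideal generated by all `[a,b][c,e]`. -/
def metaRel (K : Type) [Field K] (d : ℕ) : P K d → P K d → Prop := fun p q =>
  q = 0 ∧ ∃ a b c e : P K d, p = (a * b - b * a) * (c * e - e * c)

/-- The free metabelian associative algebra `F = P/T` of rank `2d`. -/
abbrev F (K : Type) [Field K] (d : ℕ) : Type := RingQuot (metaRel K d)

/-- `x̄_j`, the image in `F` of the free generator `x_j`. -/
noncomputable def xb (K : Type) [Field K] (d : ℕ) (j : ι d) : F K d :=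
  RingQuot.mkAlgHom K (metaRel K d) (FreeAlgebra.ι K j)

/-- The commutator ideal `F'` of `F` (image of the two-sided ideal of `P` generated by
all commutators `[a,b]`), as a `K`-subspace of `F`: it is spanned by all `a[b,c]e`. -/
noncomputable def F' (K : Type) [Field K] (d : ℕ) : Submodule K (F K d) :=
  Submodule.span K {p : F K d | ∃ a b c e : F K d, p = a * (b * c - c * b) * e}

/-- The polynomial ring `S = K[u_1, …, u_{2d}, v_1, …, v_{2d}]`; the variable
`X (Sum.inl j)` is `u_j` and `X (Sum.inr j)` is `v_j`. -/
abbrev S (K : Type) [Field K] (d : ℕ) : Type := MvPolynomial (ι d ⊕ ι d) K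

/-!
The derivation `δ` is the raising operator of an action of `sl₂` by derivations on `F`, `F'` and
`S`: the lowering operator exchanges the roles of `x_{2i-1}` and `x_{2i}`, and it exists on `F`
because `F` is free in its variety. Every vector lies in a finite-dimensional subrepresentation, and
`F'` is generated over `S` by the commutators `[x̄_i, x̄_j]`.

For such actions, the vectors killed by the raising operator `e` and the weight operator `h` are a
complement of the sum of the images of `e` and `h`, so Hilbert's finiteness argument applies to
these invariants. The kernel of `e` alone is reduced to this case by tensoring with the binary forms
`K[X₀, X₁]`: a highest weight vector of weight `n` is recovered from the invariant in the tensor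
product of the representation it generates and the forms of degree `n`, by evaluating the forms
at `(0, 1)`.
-/

section Eigenspaces

variable {K V : Type*} [Field K] [AddCommGroup V] [Module K V]

theorem le_iSup_inf_eigenspace {h : Module.End K V} (hdiag : ⨆ μ, h.eigenspace μ = ⊤)
    {p : Submodule K V} (hp : p ≤ p.comap h) : p ≤ ⨆ μ, p ⊓ h.eigenspace μ := by
  intro v hv
  obtain ⟨w, hw, rfl⟩ := (Submodule.mem_iSup_iff_exists_finsupp _ v).mp
    (hdiag ▸ Submodule.mem_top : v ∈ ⨆ μ, h.eigenspace μ)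
  have mkQ_mem (μ : K) : p.mkQ (w μ) ∈ Module.End.eigenspace (p.mapQ p h hp) μ := by
    rw [Module.End.mem_eigenspace_iff, Submodule.mkQ_apply, Submodule.mapQ_apply,
      Module.End.mem_eigenspace_iff.mp (hw μ), Submodule.Quotient.mk_smul]
  have mkQ_sum : ∑ μ ∈ w.support, p.mkQ (w μ) = 0 := by
    rw [← map_sum, Submodule.mkQ_apply, Submodule.Quotient.mk_eq_zero]
    exact hv
  have mem_p : ∀ μ ∈ w.support, w μ ∈ p := fun μ hμ => by
    rw [← Submodule.Quotient.mk_eq_zero]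
    exact (iSupIndep_iff_finsetSum_eq_zero_imp_eq_zero _).mp
      (Module.End.eigenspaces_iSupIndep (p.mapQ p h hp)) w.support _ (fun ν _ => mkQ_mem ν)
      mkQ_sum μ hμ
  exact Submodule.sum_mem _ fun μ hμ => Submodule.mem_iSup_of_mem μ ⟨mem_p μ hμ, hw μ⟩

theorem iSup_eigenspace_restrict_eq_top {h : Module.End K V} (hdiag : ⨆ μ, h.eigenspace μ = ⊤)
    {p : Submodule K V} (hp : ∀ x ∈ p, h x ∈ p) :
    ⨆ μ, Module.End.eigenspace (h.restrict hp) μ = ⊤ := by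
  apply Submodule.map_injective_of_injective p.injective_subtype
  apply le_antisymm (Submodule.map_mono le_top)
  rw [Submodule.map_subtype_top, Submodule.map_iSup]
  refine (le_iSup_inf_eigenspace hdiag hp).trans (iSup_mono fun μ x hx => ?_)
  exact ⟨⟨x, hx.1⟩, Module.End.mem_eigenspace_iff.mpr
    (Subtype.ext (Module.End.mem_eigenspace_iff.mp hx.2)), rfl⟩

theorem maxGenEigenspace_restrict_eq_top {e : Module.End K V} {μ : K}
    (he : e.maxGenEigenspace μ = ⊤) {p : Submodule K V} (hp : ∀ x ∈ p, e x ∈ p) :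
    Module.End.maxGenEigenspace (e.restrict hp) μ = ⊤ :=
  (Module.End.genEigenspace_restrict e p ⊤ μ hp).trans
    (Submodule.comap_subtype_eq_top.mpr (le_top.trans he.ge))

theorem iSup_eigenspace_neg (h : Module.End K V) :
    ⨆ μ, (-h).eigenspace μ = ⨆ μ, h.eigenspace μ := by
  refine (Equiv.neg K).iSup_congr fun μ => ?_
  ext v
  simp [neg_eq_iff_eq_neg]

theorem exists_pow_apply_eq_zero {e : Module.End K V} (he : e.maxGenEigenspace 0 = ⊤) (v : V) :
    ∃ n : ℕ, (e ^ n) v = 0 := by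
  simpa using (e.mem_maxGenEigenspace 0 v).mp (he ▸ Submodule.mem_top)

theorem exists_pow_apply_ne_zero_and_pow_succ_apply_eq_zero {e : Module.End K V}
    (he : e.maxGenEigenspace 0 = ⊤) {v : V} (hv : v ≠ 0) :
    ∃ n : ℕ, (e ^ n) v ≠ 0 ∧ (e ^ (n + 1)) v = 0 := by
  classical
  have hex := exists_pow_apply_eq_zero he v
  obtain ⟨n, hn⟩ : ∃ n, Nat.find hex = n + 1 :=
    Nat.exists_eq_succ_of_ne_zero fun h0 => hv (by simpa [h0] using Nat.find_spec hex)
  exact ⟨n, Nat.find_min hex (by omega), hn ▸ Nat.find_spec hex⟩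

end Eigenspaces

section Bilinear

open TensorProduct

variable {K A B C : Type*} [Field K] [AddCommGroup A] [Module K A]
  [AddCommGroup B] [Module K B] [AddCommGroup C] [Module K C]

/-- The action of a pair of endomorphisms on a tensor product by the Leibniz rule, as for the
tensor product of two representations of a Lie algebra. -/
noncomputable def tensorAct (D : Module.End K A) (E : Module.End K B) :
    Module.End K (A ⊗[K] B) :=
  D.rTensor B + E.lTensor A

@[simp]
theorem tensorAct_tmul (D : Module.End K A) (E : Module.End K B) (a : A) (b : B) :
    tensorAct D E (a ⊗ₜ b) = D a ⊗ₜ b + a ⊗ₜ E b := by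
  simp [tensorAct]

theorem tmul_mem_maxGenEigenspace {D : Module.End K A} {E : Module.End K B} {μ ν : K}
    {a : A} {b : B} (ha : a ∈ D.maxGenEigenspace μ) (hb : b ∈ E.maxGenEigenspace ν) :
    a ⊗ₜ[K] b ∈ (tensorAct D E).maxGenEigenspace (μ + ν) := by
  have hcomm : Commute (D.rTensor B) (E.lTensor A) := by
    rw [commute_iff_eq, Module.End.mul_eq_comp, Module.End.mul_eq_comp,
      LinearMap.rTensor_comp_lTensor, LinearMap.lTensor_comp_rTensor]
  have hle := Module.End.genEigenspace_inf_le_add (D.rTensor B) (E.lTensor A) μ ν ⊤ ⊤ hcomm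
  refine hle ⟨?_, ?_⟩
  · obtain ⟨k, hk⟩ := (D.mem_maxGenEigenspace μ a).mp ha
    have hpow : D.rTensor B - μ • 1 = (D - μ • 1).rTensor B := by
      rw [LinearMap.rTensor_sub, LinearMap.rTensor_smul]; simp [Module.End.one_eq_id]
    refine (Module.End.mem_maxGenEigenspace (D.rTensor B) μ _).mpr ⟨k, ?_⟩
    rw [hpow, LinearMap.rTensor_pow, LinearMap.rTensor_tmul, hk, zero_tmul]
  · obtain ⟨k, hk⟩ := (E.mem_maxGenEigenspace ν b).mp hb
    have hpow : E.lTensor A - ν • 1 = (E - ν • 1).lTensor A := by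
      rw [LinearMap.lTensor_sub, LinearMap.lTensor_smul]; simp [Module.End.one_eq_id]
    refine (Module.End.mem_maxGenEigenspace (E.lTensor A) ν _).mpr ⟨k, ?_⟩
    rw [hpow, LinearMap.lTensor_pow, LinearMap.lTensor_tmul, hk, tmul_zero]

variable {β : A →ₗ[K] B →ₗ[K] C} {D : Module.End K A} {E : Module.End K B} {G : Module.End K C}

theorem map₂_maxGenEigenspace_zero_le (hβ : ∀ a b, G (β a b) = β (D a) b + β a (E b)) :
    Submodule.map₂ β (D.maxGenEigenspace 0) (E.maxGenEigenspace 0) ≤ G.maxGenEigenspace 0 := by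
  refine Submodule.map₂_le.mpr fun a ha b hb => ?_
  have hintertwine : G ∘ₗ lift β = lift β ∘ₗ tensorAct D E := by
    ext a b
    simp [hβ]
  obtain ⟨k, hk⟩ := ((tensorAct D E).mem_maxGenEigenspace (0 + 0) _).mp
    (tmul_mem_maxGenEigenspace ha hb)
  rw [add_zero, zero_smul, sub_zero] at hk
  refine (G.mem_maxGenEigenspace 0 _).mpr ⟨k, ?_⟩
  rw [zero_smul, sub_zero, ← lift.tmul, ← LinearMap.comp_apply,
    Module.End.commute_pow_left_of_commute hintertwine, LinearMap.comp_apply, hk, map_zero]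

theorem map₂_iSup_eigenspace_le (hβ : ∀ a b, G (β a b) = β (D a) b + β a (E b)) :
    Submodule.map₂ β (⨆ μ, D.eigenspace μ) (⨆ ν, E.eigenspace ν) ≤ ⨆ μ, G.eigenspace μ := by
  simp only [Submodule.map₂_iSup_left, Submodule.map₂_iSup_right, iSup_le_iff]
  refine fun ν μ => Submodule.map₂_le.mpr fun a ha b hb => ?_
  refine Submodule.mem_iSup_of_mem (μ + ν) (Module.End.mem_eigenspace_iff.mpr ?_)
  rw [hβ, Module.End.mem_eigenspace_iff.mp ha, Module.End.mem_eigenspace_iff.mp hb, map_smul,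
    map_smul, LinearMap.smul_apply, add_smul]

end Bilinear

section Sl2

/-- A representation of `sl₂` on `V`, given by the operators of the standard basis `h, e, f`, which
is integrable: `e` and `f` are locally nilpotent and `h` is diagonalizable. Local nilpotence is
encoded as the generalized eigenspace at `0` being everything. Mathlib's `IsSl2Triple` is not
reused because it excludes `h = 0`, that is, trivial representations. -/
structure IsIntegrableSl2Triple {K V : Type*} [Field K] [AddCommGroup V] [Module K V]
    (h e f : Module.End K V) : Prop where
  e_f_apply (v : V) : e (f v) = f (e v) + h v
  h_e_apply (v : V) : h (e v) = e (h v) + (2 : K) • e v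
  h_f_apply (v : V) : h (f v) = f (h v) - (2 : K) • f v
  maxGenEigenspace_e : e.maxGenEigenspace 0 = ⊤
  maxGenEigenspace_f : f.maxGenEigenspace 0 = ⊤
  iSup_eigenspace_h : ⨆ μ, h.eigenspace μ = ⊤

namespace IsIntegrableSl2Triple

variable {K V : Type*} [Field K] [AddCommGroup V] [Module K V] {h e f : Module.End K V}

theorem symm (T : IsIntegrableSl2Triple h e f) : IsIntegrableSl2Triple (-h) f e where
  e_f_apply v := by rw [T.e_f_apply, LinearMap.neg_apply, add_neg_cancel_right]
  h_e_apply v := by simp [T.h_f_apply, sub_eq_neg_add]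
  h_f_apply v := by simp [T.h_e_apply, sub_eq_add_neg, add_comm]
  maxGenEigenspace_e := T.maxGenEigenspace_f
  maxGenEigenspace_f := T.maxGenEigenspace_e
  iSup_eigenspace_h := (iSup_eigenspace_neg h).trans T.iSup_eigenspace_h

theorem restrict (T : IsIntegrableSl2Triple h e f) {p : Submodule K V} (hh : ∀ x ∈ p, h x ∈ p)
    (he : ∀ x ∈ p, e x ∈ p) (hf : ∀ x ∈ p, f x ∈ p) :
    IsIntegrableSl2Triple (h.restrict hh) (e.restrict he) (f.restrict hf) where
  e_f_apply v := Subtype.ext (T.e_f_apply v)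
  h_e_apply v := Subtype.ext (T.h_e_apply v)
  h_f_apply v := Subtype.ext (T.h_f_apply v)
  maxGenEigenspace_e := maxGenEigenspace_restrict_eq_top T.maxGenEigenspace_e he
  maxGenEigenspace_f := maxGenEigenspace_restrict_eq_top T.maxGenEigenspace_f hf
  iSup_eigenspace_h := iSup_eigenspace_restrict_eq_top T.iSup_eigenspace_h hh

theorem tensorProduct {W : Type*} [AddCommGroup W] [Module K W] {h' e' f' : Module.End K W}
    (T : IsIntegrableSl2Triple h e f) (T' : IsIntegrableSl2Triple h' e' f') :
    IsIntegrableSl2Triple (tensorAct h h') (tensorAct e e') (tensorAct f f') where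
  e_f_apply t := by
    induction t with
    | zero => simp only [map_zero, add_zero]
    | tmul v w =>
      simp only [tensorAct_tmul, map_add, T.e_f_apply, T'.e_f_apply, TensorProduct.add_tmul,
        TensorProduct.tmul_add]
      abel
    | add s t hs ht => simp only [map_add, hs, ht]; abel
  h_e_apply t := by
    induction t with
    | zero => simp only [map_zero, add_zero, smul_zero]
    | tmul v w =>
      simp only [tensorAct_tmul, map_add, T.h_e_apply, T'.h_e_apply, TensorProduct.add_tmul,
        TensorProduct.tmul_add, smul_add, TensorProduct.smul_tmul', TensorProduct.tmul_smul]
      abel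
    | add s t hs ht => simp only [map_add, smul_add, hs, ht]; abel
  h_f_apply t := by
    induction t with
    | zero => simp only [map_zero, sub_zero, smul_zero]
    | tmul v w =>
      simp only [tensorAct_tmul, map_add, T.h_f_apply, T'.h_f_apply, TensorProduct.sub_tmul,
        TensorProduct.tmul_sub, smul_add, TensorProduct.smul_tmul', TensorProduct.tmul_smul]
      abel
    | add s t hs ht => simp only [map_add, smul_add, hs, ht]; abel
  maxGenEigenspace_e := by
    rw [eq_top_iff, ← TensorProduct.map₂_mk_top_top_eq_top, ← T.maxGenEigenspace_e,
      ← T'.maxGenEigenspace_e]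
    exact map₂_maxGenEigenspace_zero_le (by simp)
  maxGenEigenspace_f := by
    rw [eq_top_iff, ← TensorProduct.map₂_mk_top_top_eq_top, ← T.maxGenEigenspace_f,
      ← T'.maxGenEigenspace_f]
    exact map₂_maxGenEigenspace_zero_le (by simp)
  iSup_eigenspace_h := by
    rw [eq_top_iff, ← TensorProduct.map₂_mk_top_top_eq_top, ← T.iSup_eigenspace_h,
      ← T'.iSup_eigenspace_h]
    exact map₂_iSup_eigenspace_le (by simp)

theorem h_e_pow (T : IsIntegrableSl2Triple h e f) {v : V} {μ : K} (hv : h v = μ • v) (k : ℕ) :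
    h ((e ^ k) v) = (μ + 2 * k) • (e ^ k) v := by
  induction k with
  | zero => simp [hv]
  | succ k ih =>
    rw [pow_succ', Module.End.mul_apply, T.h_e_apply, ih, map_smul, ← add_smul]
    push_cast
    ring_nf

theorem h_f_pow (T : IsIntegrableSl2Triple h e f) {v : V} {μ : K} (hv : h v = μ • v) (k : ℕ) :
    h ((f ^ k) v) = (μ - 2 * k) • (f ^ k) v := by
  have hneg : (-h) v = (-μ) • v := by rw [LinearMap.neg_apply, hv, neg_smul]
  rw [← neg_inj, ← LinearMap.neg_apply, T.symm.h_e_pow hneg, ← neg_smul]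
  ring_nf

theorem e_f_pow_succ (T : IsIntegrableSl2Triple h e f) {v : V} {μ : K} (hv : h v = μ • v)
    (k : ℕ) :
    e ((f ^ (k + 1)) v) = (f ^ (k + 1)) (e v) + ((k + 1) * (μ - k)) • (f ^ k) v := by
  have hpow (n : ℕ) (w : V) : f ((f ^ n) w) = (f ^ (n + 1)) w := by
    rw [pow_succ', Module.End.mul_apply]
  induction k with
  | zero => simp [hv, T.e_f_apply]
  | succ k ih =>
    rw [← hpow (k + 1), T.e_f_apply, ih, T.h_f_pow hv, map_add, map_smul, hpow, hpow, add_assoc,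
      ← add_smul]
    push_cast
    ring_nf

theorem e_pow_f_pow (T : IsIntegrableSl2Triple h e f) {v : V} {μ : K} (hv : h v = μ • v)
    (he : e v = 0) (k : ℕ) :
    (e ^ k) ((f ^ k) v) = (∏ j ∈ Finset.range k, ((j + 1) * (μ - j))) • v := by
  induction k with
  | zero => simp
  | succ k ih =>
    rw [pow_succ e, Module.End.mul_apply, T.e_f_pow_succ hv, he, map_zero, zero_add, map_smul, ih,
      smul_smul, Finset.prod_range_succ, mul_comm]

theorem range_e_sup_range_h_le (T : IsIntegrableSl2Triple h e f) :
    LinearMap.range e ⊔ LinearMap.range h ≤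
      (h.eigenspace (-2)).map e ⊔ ⨆ μ ≠ 0, h.eigenspace μ := by
  rw [LinearMap.range_eq_map, LinearMap.range_eq_map, ← T.iSup_eigenspace_h, Submodule.map_iSup,
    Submodule.map_iSup]
  refine sup_le (iSup_le fun μ => ?_) (iSup_le fun μ => ?_)
  · by_cases hμ : μ = -2
    · exact hμ ▸ le_sup_left
    · rintro _ ⟨v, hv, rfl⟩
      refine Submodule.mem_sup_right (Submodule.mem_iSup_of_mem (μ + 2)
        (Submodule.mem_iSup_of_mem (by rwa [Ne, add_eq_zero_iff_eq_neg]) ?_))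
      rw [Module.End.mem_eigenspace_iff]
      simpa using T.h_e_pow (Module.End.mem_eigenspace_iff.mp hv) 1
  · rintro _ ⟨v, hv, rfl⟩
    rw [Module.End.mem_eigenspace_iff.mp hv]
    by_cases hμ : μ = 0
    · simp [hμ]
    · exact Submodule.mem_sup_right (Submodule.mem_iSup_of_mem μ (Submodule.mem_iSup_of_mem hμ
        (Submodule.smul_mem _ _ hv)))

variable [CharZero K]

theorem exists_nat_weight_of_e_eq_zero (T : IsIntegrableSl2Triple h e f) {v : V} {μ : K}
    (hv : h v = μ • v) (he : e v = 0) (hv0 : v ≠ 0) :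
    ∃ n : ℕ, μ = n ∧ (f ^ (n + 1)) v = 0 := by
  obtain ⟨n, hne, hn⟩ :=
    exists_pow_apply_ne_zero_and_pow_succ_apply_eq_zero T.maxGenEigenspace_f hv0
  refine ⟨n, ?_, hn⟩
  have hsmul : ((n + 1) * (μ - n)) • (f ^ n) v = 0 := by
    simpa [hn, he] using (T.e_f_pow_succ hv n).symm
  simpa [hne, Nat.cast_add_one_ne_zero, sub_eq_zero] using hsmul

theorem f_eq_zero (T : IsIntegrableSl2Triple h e f) {v : V} (hh : h v = 0) (he : e v = 0) :
    f v = 0 := by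
  by_cases hv0 : v = 0
  · rw [hv0, map_zero]
  obtain ⟨n, hn, hf⟩ := T.exists_nat_weight_of_e_eq_zero (μ := 0) (by rw [hh, zero_smul]) he hv0
  obtain rfl : n = 0 := by exact_mod_cast hn.symm
  simpa using hf

theorem mem_ker_e_inf_ker_h_sup_range_f (T : IsIntegrableSl2Triple h e f) {v : V} (hh : h v = 0)
    {n : ℕ} (hn : (e ^ n) v = 0) :
    v ∈ (LinearMap.ker e ⊓ LinearMap.ker h) ⊔ LinearMap.range f := by
  induction n generalizing v with
  | zero => simp [show v = 0 by simpa using hn]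
  | succ n ih =>
    rcases n with - | n
    · exact Submodule.mem_sup_left ⟨by simpa using hn, hh⟩
    set w : V := (e ^ (n + 1)) v
    have hw : h w = (2 * (n + 1 : ℕ) : K) • w := by
      simpa using T.h_e_pow (μ := 0) (by rw [hh, zero_smul]) (n + 1)
    have he : e w = 0 := by rwa [← Module.End.mul_apply, ← pow_succ']
    set c : K := ∏ j ∈ Finset.range (n + 1), ((j + 1) * (2 * (n + 1 : ℕ) - j))
    have hc : c ≠ 0 := Finset.prod_ne_zero_iff.mpr fun j hj => by
      have hj : j < n + 1 := Finset.mem_range.mp hj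
      refine mul_ne_zero (Nat.cast_add_one_ne_zero j) (sub_ne_zero.mpr ?_)
      exact_mod_cast (by omega : 2 * (n + 1) ≠ j)
    set u : V := c⁻¹ • (f ^ (n + 1)) w
    have hu : h (v - u) = 0 := by simp [u, hh, T.h_f_pow hw]
    have eu : (e ^ (n + 1)) (v - u) = 0 := by
      rw [map_sub, map_smul, T.e_pow_f_pow hw he, inv_smul_smul₀ hc, sub_self]
    have hf : u ∈ LinearMap.range f :=
      Submodule.smul_mem _ _ ⟨(f ^ n) w, by rw [pow_succ', Module.End.mul_apply]⟩
    exact sub_add_cancel v u ▸ add_mem (ih hu eu) (Submodule.mem_sup_right hf)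

theorem codisjoint_ker_range (T : IsIntegrableSl2Triple h e f) :
    Codisjoint (LinearMap.ker e ⊓ LinearMap.ker h) (LinearMap.range e ⊔ LinearMap.range h) := by
  rw [codisjoint_iff_le_sup, ← T.iSup_eigenspace_h]
  refine iSup_le fun μ v hv => ?_
  rw [Module.End.mem_eigenspace_iff] at hv
  by_cases hμ : μ = 0
  · have hh : h v = 0 := by rw [hv, hμ, zero_smul]
    obtain ⟨n, hn⟩ := exists_pow_apply_eq_zero T.maxGenEigenspace_f v
    have hle : LinearMap.ker f ⊓ LinearMap.ker (-h) ≤ LinearMap.ker e ⊓ LinearMap.ker h :=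
      fun w hw => ⟨T.symm.f_eq_zero hw.2 hw.1, neg_eq_zero.mp hw.2⟩
    exact sup_le_sup hle le_sup_left
      (T.symm.mem_ker_e_inf_ker_h_sup_range_f (by simp [hh]) hn)
  · refine Submodule.mem_sup_right (Submodule.mem_sup_right ⟨μ⁻¹ • v, ?_⟩)
    rw [map_smul, hv, inv_smul_smul₀ hμ]

theorem eq_zero_of_e_e_eq_zero (T : IsIntegrableSl2Triple h e f) {v : V}
    (hv : h v = (-2 : K) • v) (he : e (e v) = 0) : v = 0 := by
  by_contra hv0
  have hhe : h (e v) = 0 := by rw [T.h_e_apply, hv, map_smul, ← add_smul]; simp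
  have hfe : f (e v) = 0 := T.f_eq_zero hhe he
  obtain ⟨n, hne, hn⟩ :=
    exists_pow_apply_ne_zero_and_pow_succ_apply_eq_zero T.maxGenEigenspace_f hv0
  have hsmul : ((n + 1) * (-2 - n : K)) • (f ^ n) v = 0 := by
    have hfpow : (f ^ (n + 1)) (e v) = 0 := by rw [pow_succ, Module.End.mul_apply, hfe, map_zero]
    simpa only [hn, hfpow, map_zero, zero_add] using (T.e_f_pow_succ hv n).symm
  have hcoeff : (n + 1) * (-2 - n : K) ≠ 0 := by
    rw [← neg_add', mul_neg, neg_ne_zero]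
    exact_mod_cast (by positivity : (n + 1) * (2 + n) ≠ 0)
  exact (smul_ne_zero hcoeff hne) hsmul

theorem disjoint_ker_range (T : IsIntegrableSl2Triple h e f) :
    Disjoint (LinearMap.ker e ⊓ LinearMap.ker h) (LinearMap.range e ⊔ LinearMap.range h) := by
  rw [Submodule.disjoint_def]
  rintro v ⟨he, hh⟩ hv
  obtain ⟨_, ⟨a, ha, rfl⟩, b, hb, rfl⟩ := Submodule.mem_sup.mp (T.range_e_sup_range_h_le hv)
  rw [SetLike.mem_coe, Module.End.mem_eigenspace_iff] at ha
  have hea : h (e a) = 0 := by rw [T.h_e_apply, ha, map_smul, ← add_smul]; simp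
  have hb0 : b = 0 := by
    have hmem : b ∈ h.eigenspace 0 := by simpa [hea] using hh
    exact Submodule.disjoint_def.mp (h.eigenspaces_iSupIndep 0) b hmem hb
  have hee : e (e a) = 0 := by simpa [hb0] using he
  rw [hb0, T.eq_zero_of_e_e_eq_zero ha hee, map_zero, add_zero]

end IsIntegrableSl2Triple

end Sl2

section Invariants

/-- `D'` acts on the `R`-module `M` by the Leibniz rule, relative to `D` acting on `R`. For `M = R`
and `D' = D` this says that `D` is a derivation; Mathlib's `Derivation` requires `R` to be
commutative. -/
def IsLeibniz {K R M : Type*} [CommRing K] [Ring R] [Module K R] [AddCommGroup M] [Module K M]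
    [Module R M] (D : Module.End K R) (D' : Module.End K M) : Prop :=
  ∀ (r : R) (m : M), D' (r • m) = D r • m + r • D' m

/-- The vectors killed by all operators of a family, that is, the invariants of the Lie algebra
generated by the family. -/
def invariants {I K V : Type*} [CommRing K] [AddCommGroup V] [Module K V]
    (D : I → Module.End K V) : Submodule K V :=
  ⨅ i, LinearMap.ker (D i)

/-- The span of the images of all operators of a family; the quotient by it is the space of
coinvariants. -/
def coinvariantsKer {I K V : Type*} [CommRing K] [AddCommGroup V] [Module K V]
    (D : I → Module.End K V) : Submodule K V :=
  ⨆ i, LinearMap.range (D i)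

/-- `N` is the set of all linear combinations, with coefficients in `A`, of some finite family of
vectors. When `A` is a subring and `N` a subgroup stable under `A`, this says that `N` is a finitely
generated `A`-module. -/
def IsFinitelyGeneratedOver {R M : Type*} [Ring R] [AddCommGroup M] [Module R M]
    (A : Set R) (N : Set M) : Prop :=
  ∃ (k : ℕ) (g : Fin k → M), ∀ m, m ∈ N ↔ ∃ c : Fin k → R, (∀ i, c i ∈ A) ∧ m = ∑ i, c i • g i

theorem IsFinitelyGeneratedOver.image {R M R' M' : Type*} [Ring R] [AddCommGroup M] [Module R M]
    [Ring R'] [AddCommGroup M'] [Module R' M'] {A : Set R} {N : Set M}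
    (hN : IsFinitelyGeneratedOver A N) (φ : R → R') (ψ : M →+ M')
    (hψ : ∀ r m, ψ (r • m) = φ r • ψ m) : IsFinitelyGeneratedOver (φ '' A) (ψ '' N) := by
  obtain ⟨k, g, hg⟩ := hN
  refine ⟨k, ψ ∘ g, fun m => ⟨?_, ?_⟩⟩
  · rintro ⟨n, hn, rfl⟩
    obtain ⟨c, hc, rfl⟩ := (hg n).mp hn
    exact ⟨φ ∘ c, fun i => ⟨c i, hc i, rfl⟩, by simp [hψ]⟩
  · rintro ⟨c, hc, rfl⟩
    choose b hb hbc using hc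
    exact ⟨∑ i, b i • g i, (hg _).mpr ⟨b, hb, rfl⟩, by simp [hψ, hbc]⟩

section

variable {I K V : Type*} [CommRing K] [AddCommGroup V] [Module K V]

theorem mem_invariants {D : I → Module.End K V} {v : V} :
    v ∈ invariants D ↔ ∀ i, D i v = 0 := by
  simp [invariants]

theorem invariants_pair (D E : Module.End K V) :
    invariants ![D, E] = LinearMap.ker D ⊓ LinearMap.ker E := by
  ext; simp [mem_invariants, Fin.forall_fin_two]

theorem coinvariantsKer_pair (D E : Module.End K V) :
    coinvariantsKer ![D, E] = LinearMap.range D ⊔ LinearMap.range E := by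
  refine le_antisymm (iSup_le ?_) (sup_le (le_iSup_of_le 0 le_rfl) (le_iSup_of_le 1 le_rfl))
  exact Fin.forall_fin_two.mpr ⟨le_sup_left, le_sup_right⟩

end

variable {I K R M : Type*} [CommRing K] [Ring R] [Module K R] [AddCommGroup M] [Module K M]
  [Module R M] {D : I → Module.End K R} {D' : I → Module.End K M}

theorem smul_mem_invariants (hD : ∀ i, IsLeibniz (D i) (D' i)) {r : R} {m : M}
    (hr : r ∈ invariants D) (hm : m ∈ invariants D') : r • m ∈ invariants D' := by
  rw [mem_invariants] at hr hm ⊢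
  intro i
  rw [hD i, hr i, hm i, zero_smul, smul_zero, add_zero]

theorem smul_mem_coinvariantsKer (hD : ∀ i, IsLeibniz (D i) (D' i)) {r : R} {m : M}
    (hr : r ∈ coinvariantsKer D) (hm : m ∈ invariants D') : r • m ∈ coinvariantsKer D' := by
  induction hr using Submodule.iSup_induction' with
  | mem i r hr =>
    obtain ⟨t, rfl⟩ := hr
    refine Submodule.mem_iSup_of_mem i ⟨t • m, ?_⟩
    rw [hD i, mem_invariants.mp hm i, smul_zero, add_zero]
  | zero => rw [zero_smul]; exact zero_mem _
  | add r s _ _ hr hs => rw [add_smul]; exact add_mem hr hs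

-- Hilbert's argument: finitely many invariants generate the `R`-span of all of them, and the
-- coefficients of an invariant may be replaced by their components in `invariants D`, the error
-- lying both in `invariants D'` and in `coinvariantsKer D'`.
theorem isFinitelyGeneratedOver_invariants [IsNoetherian R M]
    (hD : ∀ i, IsLeibniz (D i) (D' i)) (hcodisj : Codisjoint (invariants D) (coinvariantsKer D))
    (hdisj : Disjoint (invariants D') (coinvariantsKer D')) :
    IsFinitelyGeneratedOver (invariants D : Set R) (invariants D' : Set M) := by
  obtain ⟨s, hs, hspan⟩ := (Submodule.fg_span_iff_fg_span_finset_subset _).mp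
    (IsNoetherian.noetherian (Submodule.span R (invariants D' : Set M)))
  set g : Fin s.card → M := fun i => s.equivFin.symm i
  have hg (i) : g i ∈ invariants D' := hs (s.equivFin.symm i).2
  have hrange : Set.range g = s := by
    rw [← Subtype.range_coe (s := (s : Set M))]
    exact EquivLike.range_comp (fun x : s => (x : M)) s.equivFin.symm
  refine ⟨s.card, g, fun m => ⟨fun hm => ?_, ?_⟩⟩
  · obtain ⟨c, hc⟩ : ∃ c : Fin s.card → R, ∑ i, c i • g i = m := by
      rw [← Submodule.mem_span_range_iff_exists_fun, hrange, ← hspan]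
      exact Submodule.subset_span hm
    choose a ha b hb hab using fun i =>
      Submodule.mem_sup.mp (hcodisj.eq_top ▸ Submodule.mem_top :
        c i ∈ invariants D ⊔ coinvariantsKer D)
    refine ⟨a, ha, sub_eq_zero.mp (Submodule.disjoint_def.mp hdisj _ ?_ ?_)⟩
    · exact sub_mem hm (sum_mem fun i _ => smul_mem_invariants hD (ha i) (hg i))
    · have herror : m - ∑ i, a i • g i = ∑ i, b i • g i := by
        rw [← hc, ← Finset.sum_sub_distrib]
        exact Finset.sum_congr rfl fun i _ => by rw [← sub_smul, ← hab i, add_sub_cancel_left]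
      exact herror ▸ sum_mem fun i _ => smul_mem_coinvariantsKer hD (hb i) (hg i)
  · rintro ⟨c, hc, rfl⟩
    exact sum_mem fun i _ => smul_mem_invariants hD (hc i) (hg i)

end Invariants

section Derivations

theorem IsLeibniz.commutator {K R M : Type*} [CommRing K] [Ring R] [Module K R] [AddCommGroup M]
    [Module K M] [Module R M] {D E : Module.End K R} {D' E' : Module.End K M}
    (hD : IsLeibniz D D') (hE : IsLeibniz E E') :
    IsLeibniz (D * E - E * D) (D' * E' - E' * D') := by
  intro r m
  simp only [LinearMap.sub_apply, Module.End.mul_apply, hD r m, hE r m, map_add, hD _ _, hE _ _,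
    sub_smul, smul_sub]
  abel

theorem isLeibniz_derivation {K R : Type*} [CommRing K] [CommRing R] [Algebra K R]
    (D : Derivation K R R) : IsLeibniz (D : Module.End K R) (D : Module.End K R) := by
  intro r s
  simp [mul_comm, add_comm]

variable {K A : Type*} [Field K] [Ring A] [Algebra K A] {X : Set A} {D E : Module.End K A}

theorem eq_top_of_adjoin_eq_top (hX : Algebra.adjoin K X = ⊤) {p : Submodule K A}
    (hone : 1 ∈ p) (hmul : ∀ a b, a ∈ p → b ∈ p → a * b ∈ p) (hXp : X ⊆ p) : p = ⊤ := by
  have hle : Algebra.adjoin K X ≤ p.toSubalgebra hone hmul := Algebra.adjoin_le hXp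
  rw [hX] at hle
  exact eq_top_iff.mpr fun a _ => hle Algebra.mem_top

theorem IsLeibniz.map_one (hD : IsLeibniz D D) : D 1 = 0 := by
  simpa using hD 1 (1 : A)

theorem IsLeibniz.smul (hD : IsLeibniz D D) (c : K) : IsLeibniz (c • D) (c • D) := by
  intro a b
  simp only [LinearMap.smul_apply, hD a b, smul_add, smul_assoc, smul_comm c a]

theorem IsLeibniz.ext_of_adjoin_eq_top (hD : IsLeibniz D D) (hE : IsLeibniz E E)
    (hX : Algebra.adjoin K X = ⊤) (hDE : Set.EqOn D E X) : D = E := by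
  rw [← LinearMap.eqLocus_eq_top]
  refine eq_top_of_adjoin_eq_top hX ?_ (fun a b ha hb => ?_) hDE
  · rw [LinearMap.mem_eqLocus, hD.map_one, hE.map_one]
  · rw [LinearMap.mem_eqLocus] at ha hb ⊢
    rw [← smul_eq_mul, hD, hE, ha, hb]

theorem IsLeibniz.maxGenEigenspace_eq_top (hD : IsLeibniz D D) (hX : Algebra.adjoin K X = ⊤)
    (hDX : X ⊆ D.maxGenEigenspace 0) : D.maxGenEigenspace 0 = ⊤ := by
  refine eq_top_of_adjoin_eq_top hX ?_ (fun a b ha hb => ?_) hDX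
  · exact (D.mem_maxGenEigenspace 0 1).mpr ⟨1, by simp [hD.map_one]⟩
  · exact map₂_maxGenEigenspace_zero_le (β := LinearMap.mul K A) hD
      (Submodule.apply_mem_map₂ _ ha hb)

theorem IsLeibniz.iSup_eigenspace_eq_top (hD : IsLeibniz D D) (hX : Algebra.adjoin K X = ⊤)
    (hDX : X ⊆ (⨆ μ, D.eigenspace μ : Submodule K A)) : ⨆ μ, D.eigenspace μ = ⊤ := by
  refine eq_top_of_adjoin_eq_top hX ?_ (fun a b ha hb => ?_) hDX
  · exact Submodule.mem_iSup_of_mem 0 (by simp [hD.map_one])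
  · exact map₂_iSup_eigenspace_le (β := LinearMap.mul K A) hD (Submodule.apply_mem_map₂ _ ha hb)

theorem IsIntegrableSl2Triple.of_adjoin_eq_top {I : Type*} {x y : I → A} {e f : Module.End K A}
    (hgen : Algebra.adjoin K (Set.range x ∪ Set.range y) = ⊤)
    (he : IsLeibniz e e) (hf : IsLeibniz f f) (hex : ∀ i, e (x i) = 0) (hey : ∀ i, e (y i) = x i)
    (hfx : ∀ i, f (x i) = y i) (hfy : ∀ i, f (y i) = 0) :
    IsIntegrableSl2Triple (e * f - f * e) e f := by
  have hh := he.commutator hf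
  set h := e * f - f * e with h_def
  have hhx (i) : h (x i) = x i := by simp [h_def, hex, hey, hfx]
  have hhy (i) : h (y i) = -y i := by simp [h_def, hey, hfx, hfy]
  have hforall {p : A → Prop} (hx : ∀ i, p (x i)) (hy : ∀ i, p (y i)) :
      ∀ a ∈ Set.range x ∪ Set.range y, p a := by
    rintro _ (⟨i, rfl⟩ | ⟨i, rfl⟩)
    exacts [hx i, hy i]
  have lie_h_e : h * e - e * h = (2 : K) • e :=
    (hh.commutator he).ext_of_adjoin_eq_top (he.smul 2) hgen <| hforall
      (fun i => by simp [hex, hhx]) (fun i => by simp [hey, hhx, hhy, two_smul])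
  have lie_h_f : h * f - f * h = (-2 : K) • f :=
    (hh.commutator hf).ext_of_adjoin_eq_top (hf.smul (-2)) hgen <| hforall
      (fun i => by simp [hfx, hhx, hhy, two_smul, sub_eq_add_neg]) (fun i => by simp [hfy, hhy])
  exact
  { e_f_apply := fun v => by simp [h_def]
    h_e_apply := fun v => by
      simpa [sub_eq_iff_eq_add'] using LinearMap.congr_fun lie_h_e v
    h_f_apply := fun v => by
      simpa [sub_eq_iff_eq_add', ← sub_eq_add_neg] using LinearMap.congr_fun lie_h_f v
    maxGenEigenspace_e := he.maxGenEigenspace_eq_top hgen <| hforall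
      (fun i => (e.mem_maxGenEigenspace 0 _).mpr ⟨1, by simp [hex]⟩)
      (fun i => (e.mem_maxGenEigenspace 0 _).mpr ⟨2, by simp [pow_two, hey, hex]⟩)
    maxGenEigenspace_f := hf.maxGenEigenspace_eq_top hgen <| hforall
      (fun i => (f.mem_maxGenEigenspace 0 _).mpr ⟨2, by simp [pow_two, hfx, hfy]⟩)
      (fun i => (f.mem_maxGenEigenspace 0 _).mpr ⟨1, by simp [hfy]⟩)
    iSup_eigenspace_h := hh.iSup_eigenspace_eq_top hgen <| hforall
      (fun i => Submodule.mem_iSup_of_mem 1 (by simp [hhx]))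
      (fun i => Submodule.mem_iSup_of_mem (-1) (by simp [hhy])) }

theorem IsIntegrableSl2Triple.isLeibniz_h {K R M : Type*} [Field K] [Ring R] [Module K R]
    [AddCommGroup M] [Module K M] [Module R M] {h e f : Module.End K R}
    {h' e' f' : Module.End K M} (T : IsIntegrableSl2Triple h e f)
    (T' : IsIntegrableSl2Triple h' e' f') (he : IsLeibniz e e') (hf : IsLeibniz f f') :
    IsLeibniz h h' := by
  have hh : h = e * f - f * e := by ext r; simp [T.e_f_apply]
  have hh' : h' = e' * f' - f' * e' := by ext m; simp [T'.e_f_apply]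
  exact hh ▸ hh' ▸ he.commutator hf

theorem IsIntegrableSl2Triple.isFinitelyGeneratedOver_ker_inf_ker {K R M : Type*} [Field K]
    [CharZero K] [Ring R] [Module K R] [AddCommGroup M] [Module K M] [Module R M]
    [IsNoetherian R M] {h e f : Module.End K R} {h' e' f' : Module.End K M}
    (T : IsIntegrableSl2Triple h e f) (T' : IsIntegrableSl2Triple h' e' f')
    (he : IsLeibniz e e') (hf : IsLeibniz f f') :
    IsFinitelyGeneratedOver ((LinearMap.ker e ⊓ LinearMap.ker h : Submodule K R) : Set R)
      ((LinearMap.ker e' ⊓ LinearMap.ker h' : Submodule K M) : Set M) := by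
  have hleib : ∀ i, IsLeibniz (![e, h] i) (![e', h'] i) :=
    Fin.forall_fin_two.mpr ⟨he, T.isLeibniz_h T' he hf⟩
  rw [← invariants_pair, ← invariants_pair]
  refine isFinitelyGeneratedOver_invariants hleib ?_ ?_
  · rw [invariants_pair, coinvariantsKer_pair]
    exact T.codisjoint_ker_range
  · rw [invariants_pair, coinvariantsKer_pair]
    exact T'.disjoint_ker_range

end Derivations

section Transfer

open TensorProduct

section Evaluation

variable {K V W : Type*} [Field K] [AddCommGroup V] [Module K V] [AddCommGroup W] [Module K W]

/-- Contraction of the second factor of `V ⊗ W` with a linear form on `W`. -/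
noncomputable def evalRight (V : Type*) [AddCommGroup V] [Module K V] (ε : W →ₗ[K] K) :
    V ⊗[K] W →ₗ[K] V :=
  TensorProduct.rid K V ∘ₗ ε.lTensor V

@[simp]
theorem evalRight_tmul (ε : W →ₗ[K] K) (v : V) (w : W) : evalRight V ε (v ⊗ₜ w) = ε w • v := by
  simp [evalRight]

theorem evalRight_tensorAct {e : Module.End K V} {e' : Module.End K W} {ε : W →ₗ[K] K}
    (hε : ε ∘ₗ e' = 0) (z : V ⊗[K] W) :
    evalRight V ε (tensorAct e e' z) = e (evalRight V ε z) := by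
  have hε (w : W) : ε (e' w) = 0 := LinearMap.congr_fun hε w
  induction z with
  | zero => simp only [map_zero]
  | tmul v w => simp [hε]
  | add y z hy hz => simp only [map_add, hy, hz]

/-- The partial sums of the canonical invariant in the tensor product of an irreducible
representation of highest weight `n`, generated by `v`, and its dual, generated by the lowest
weight vector `w`. The coefficients make all terms but one cancel when `e` is applied. -/
noncomputable def invariantPartialSum (f : Module.End K V) (e : Module.End K W) (n : ℕ) (v : V)
    (w : W) (j : ℕ) : V ⊗[K] W :=
  ∑ k ∈ Finset.range (j + 1),
    ((-1) ^ k / (k.factorial * n.descFactorial k) : K) • ((f ^ k) v ⊗ₜ (e ^ k) w)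

theorem evalRight_invariantPartialSum (f : Module.End K V) {e : Module.End K W} {ε : W →ₗ[K] K}
    (hε : ε ∘ₗ e = 0) (n : ℕ) (v : V) (w : W) (j : ℕ) :
    evalRight V ε (invariantPartialSum f e n v w j) = ε w • v := by
  have hε (k : ℕ) : ε ((e ^ (k + 1)) w) = 0 := by
    rw [pow_succ', Module.End.mul_apply]
    exact LinearMap.congr_fun hε _
  simp [invariantPartialSum, Finset.sum_range_succ', hε]

namespace IsIntegrableSl2Triple

variable {h e f : Module.End K V} {h' e' f' : Module.End K W}

theorem tensorAct_h_invariantPartialSum (T : IsIntegrableSl2Triple h e f)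
    (T' : IsIntegrableSl2Triple h' e' f') {n : ℕ} {v : V} {w : W} (hv : h v = (n : K) • v)
    (hw : h' w = (-n : K) • w) (j : ℕ) :
    tensorAct h h' (invariantPartialSum f e' n v w j) = 0 := by
  rw [invariantPartialSum, map_sum]
  refine Finset.sum_eq_zero fun k _ => ?_
  rw [map_smul, tensorAct_tmul, T.h_f_pow hv, T'.h_e_pow hw, ← smul_tmul', tmul_smul, ← add_smul]
  ring_nf
  rw [zero_smul, smul_zero]

variable [CharZero K]

theorem tensorAct_e_invariantPartialSum (T : IsIntegrableSl2Triple h e f) (e' : Module.End K W)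
    {n : ℕ} {v : V} (hv : h v = (n : K) • v) (he : e v = 0) (w : W) {j : ℕ} (hj : j ≤ n) :
    tensorAct e e' (invariantPartialSum f e' n v w j) =
      ((-1) ^ j / (j.factorial * n.descFactorial j) : K) • ((f ^ j) v ⊗ₜ (e' ^ (j + 1)) w) := by
  induction j with
  | zero => simp [invariantPartialSum, he]
  | succ j ih =>
    have hcoeff : ((-1) ^ j / (j.factorial * n.descFactorial j) : K) +
        (-1) ^ (j + 1) / ((j + 1).factorial * n.descFactorial (j + 1)) *
          ((j + 1) * (n - j)) = 0 := by
      have hfac : (j.factorial : K) ≠ 0 := Nat.cast_ne_zero.mpr j.factorial_ne_zero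
      have hdesc : (n.descFactorial j : K) ≠ 0 :=
        Nat.cast_ne_zero.mpr (Nat.descFactorial_eq_zero_iff_lt.not.mpr (by omega))
      have hsub : (n - j : K) ≠ 0 := sub_ne_zero.mpr (Nat.cast_injective.ne (by omega))
      have hsucc : (j + 1 : K) ≠ 0 := Nat.cast_add_one_ne_zero j
      rw [Nat.factorial_succ, Nat.descFactorial_succ]
      push_cast [Nat.cast_sub (by omega : j ≤ n)]
      field_simp
      ring
    rw [invariantPartialSum, Finset.sum_range_succ, ← invariantPartialSum, map_add,
      ih (by omega), map_smul, tensorAct_tmul, T.e_f_pow_succ hv, he, map_zero, zero_add,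
      ← smul_tmul', smul_add, smul_smul, ← add_assoc, ← add_smul, hcoeff, zero_smul, zero_add,
      ← Module.End.mul_apply e', ← pow_succ']

theorem exists_invariant_evalRight_eq (T : IsIntegrableSl2Triple h e f)
    (T' : IsIntegrableSl2Triple h' e' f') {ε : W →ₗ[K] K} (hε : ε ∘ₗ e' = 0) {n : ℕ} {v : V}
    {w : W} (hv : h v = (n : K) • v) (he : e v = 0) (hw : h' w = (-n : K) • w) (hf : f' w = 0) :
    ∃ z, tensorAct e e' z = 0 ∧ tensorAct h h' z = 0 ∧
      evalRight V ε z = ε w • v := by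
  refine ⟨invariantPartialSum f e' n v w n, ?_, T.tensorAct_h_invariantPartialSum T' hv hw n,
    evalRight_invariantPartialSum f hε n v w n⟩
  have hpow : (e' ^ (n + 1)) w = 0 := by
    by_cases hw0 : w = 0
    · rw [hw0, map_zero]
    obtain ⟨m, hm, hpow⟩ := T'.symm.exists_nat_weight_of_e_eq_zero (μ := n) (by simp [hw]) hf hw0
    rwa [Nat.cast_injective hm]
  rw [T.tensorAct_e_invariantPartialSum e' hv he w le_rfl, hpow, tmul_zero, smul_zero]

theorem map_evalRight_ker_inf_ker (T : IsIntegrableSl2Triple h e f)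
    (T' : IsIntegrableSl2Triple h' e' f') {ε : W →ₗ[K] K} (hε : ε ∘ₗ e' = 0)
    (hlowest : ∀ n : ℕ, ∃ w, h' w = (-n : K) • w ∧ f' w = 0 ∧ ε w = 1) :
    (LinearMap.ker (tensorAct e e') ⊓ LinearMap.ker (tensorAct h h')).map (evalRight V ε) =
      LinearMap.ker e := by
  apply le_antisymm
  · rintro _ ⟨z, ⟨hz, -⟩, rfl⟩
    rw [LinearMap.mem_ker, ← evalRight_tensorAct hε, LinearMap.mem_ker.mp hz, map_zero]
  · have hstable : LinearMap.ker e ≤ (LinearMap.ker e).comap h := fun v hv => by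
      simpa [LinearMap.mem_ker.mp hv] using (T.h_e_apply v).symm
    refine (le_iSup_inf_eigenspace T.iSup_eigenspace_h hstable).trans (iSup_le fun μ v hv => ?_)
    obtain ⟨he, hμ⟩ := hv
    by_cases hv0 : v = 0
    · exact hv0 ▸ zero_mem _
    rw [SetLike.mem_coe, Module.End.mem_eigenspace_iff] at hμ
    obtain ⟨n, rfl, -⟩ := T.exists_nat_weight_of_e_eq_zero hμ he hv0
    obtain ⟨w, hw, hf, hεw⟩ := hlowest n
    obtain ⟨z, hez, hhz, hz⟩ := T.exists_invariant_evalRight_eq T' hε hμ he hw hf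
    exact ⟨z, ⟨hez, hhz⟩, by rw [hz, hεw, one_smul]⟩

end IsIntegrableSl2Triple

end Evaluation

section BinaryForms

variable (K : Type*) [Field K]

/-- The raising operator `X₀ ∂/∂X₁` of the action of `sl₂` on `K[X₀, X₁]`. -/
noncomputable def binaryRaising :
    Derivation K (MvPolynomial (Fin 2) K) (MvPolynomial (Fin 2) K) :=
  mkDerivation K ![0, X 0]

/-- The lowering operator `X₁ ∂/∂X₀` of the action of `sl₂` on `K[X₀, X₁]`. -/
noncomputable def binaryLowering :
    Derivation K (MvPolynomial (Fin 2) K) (MvPolynomial (Fin 2) K) :=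
  mkDerivation K ![X 1, 0]

/-- The weight operator `X₀ ∂/∂X₀ - X₁ ∂/∂X₁` of the action of `sl₂` on `K[X₀, X₁]`. -/
noncomputable def binaryWeight :
    Derivation K (MvPolynomial (Fin 2) K) (MvPolynomial (Fin 2) K) :=
  ⁅binaryRaising K, binaryLowering K⁆

theorem isIntegrableSl2Triple_binary :
    IsIntegrableSl2Triple (binaryWeight K : Module.End K (MvPolynomial (Fin 2) K))
      (binaryRaising K : Module.End K (MvPolynomial (Fin 2) K))
      (binaryLowering K : Module.End K (MvPolynomial (Fin 2) K)) := by
  have hgen : Algebra.adjoin K (Set.range (fun _ : Unit => X 0) ∪ Set.range fun _ : Unit => X 1) =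
      (⊤ : Subalgebra K (MvPolynomial (Fin 2) K)) := by
    rw [← adjoin_range_X]
    congr 1
    ext
    simp [Fin.exists_fin_two, eq_comm, or_comm]
  exact .of_adjoin_eq_top hgen (isLeibniz_derivation _) (isLeibniz_derivation _)
    (fun _ => by simp [binaryRaising, mkDerivation_X])
    (fun _ => by simp [binaryRaising, mkDerivation_X])
    (fun _ => by simp [binaryLowering, mkDerivation_X])
    (fun _ => by simp [binaryLowering, mkDerivation_X])

theorem aeval_binaryRaising (q : MvPolynomial (Fin 2) K) :
    aeval ![(0 : K), 1] (binaryRaising K q) = 0 := by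
  induction q using MvPolynomial.induction_on with
  | C c => simp
  | add p q hp hq => rw [map_add, map_add, hp, hq, add_zero]
  | mul_X p i hp =>
    rw [Derivation.leibniz, map_add, smul_eq_mul, smul_eq_mul, map_mul, map_mul, hp]
    fin_cases i <;> simp [binaryRaising, mkDerivation_X]

theorem binaryLowering_X_one_pow (n : ℕ) : binaryLowering K (X 1 ^ n) = 0 := by
  simp [Derivation.leibniz_pow, binaryLowering, mkDerivation_X]

theorem binaryWeight_X_one_pow (n : ℕ) :
    binaryWeight K (X 1 ^ n) = (-n : K) • (X 1 ^ n : MvPolynomial (Fin 2) K) := by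
  have hX : binaryWeight K (X 1) = -X 1 := by
    simp [binaryWeight, Derivation.commutator_apply, binaryRaising, binaryLowering, mkDerivation_X]
  rcases n with - | n
  · simp
  · rw [Derivation.leibniz_pow, hX]
    simp only [add_tsub_cancel_right, smul_eq_mul, mul_neg, smul_neg, nsmul_eq_mul, Nat.cast_add,
      Nat.cast_one, neg_add_rev, pow_succ, smul_eq_C_mul, C_add, C_neg, C_1, map_natCast]
    ring

end BinaryForms

section TensorModule

variable {K R M B : Type*} [Field K] [CommRing R] [Algebra K R] [AddCommGroup M] [Module K M]
  [Module R M] [IsScalarTower K R M] [CommRing B] [Algebra K B]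

/-- `M ⊗ B` as a module over `R ⊗ B`, for an `R`-module `M`. -/
@[reducible]
noncomputable def tensorModule : Module (R ⊗[K] B) (M ⊗[K] B) :=
  Module.compHom (M ⊗[K] B) <| RingHomClass.toRingHom <|
    (Module.endTensorEndAlgHom (R := K) (A := K) (M := M) (N := B)).comp
      (Algebra.TensorProduct.map (Algebra.lsmul K K M) (Algebra.lmul K B))

attribute [local instance] tensorModule

theorem tmul_smul_tmul_eq (r : R) (b : B) (m : M) (c : B) :
    (r ⊗ₜ[K] b) • (m ⊗ₜ[K] c) = (r • m) ⊗ₜ[K] (b * c) :=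
  rfl

theorem IsLeibniz.tensorAct {D : Module.End K R} {D' : Module.End K M} (hD : IsLeibniz D D')
    {E : Module.End K B} (hE : IsLeibniz E E) : IsLeibniz (tensorAct D E) (tensorAct D' E) := by
  intro r m
  induction r with
  | zero => simp only [zero_smul, map_zero, add_zero]
  | add r s hr hs => simp only [add_smul, map_add, hr, hs]; abel
  | tmul r b =>
    induction m with
    | zero => simp only [smul_zero, map_zero, add_zero]
    | add m n hm hn => simp only [smul_add, map_add, hm, hn]; abel
    | tmul m c =>
      have hbc : E (b * c) = E b * c + b * E c := hE b c
      simp only [tensorAct_tmul, add_smul, smul_add, tmul_smul_tmul_eq, hD r m, hbc, add_tmul,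
        tmul_add]
      abel

theorem evalRight_smul (ε : B →ₐ[K] K) (r : R ⊗[K] B) (m : M ⊗[K] B) :
    evalRight M ε.toLinearMap (r • m) =
      evalRight R ε.toLinearMap r • evalRight M ε.toLinearMap m := by
  induction r with
  | zero => simp only [zero_smul, map_zero]
  | add r s hr hs => simp only [add_smul, map_add, hr, hs]
  | tmul r b =>
    induction m with
    | zero => simp only [smul_zero, map_zero]
    | add m n hm hn => simp only [smul_add, map_add, hm, hn]
    | tmul m c =>
      simp only [tmul_smul_tmul_eq, evalRight_tmul, AlgHom.toLinearMap_apply, map_mul, smul_assoc,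
        mul_smul]
      rw [smul_algebra_smul_comm (ε c) r m]

theorem finite_tensorModule [Module.Finite R M] : Module.Finite (R ⊗[K] B) (M ⊗[K] B) := by
  obtain ⟨s, hs⟩ := Module.Finite.fg_top (R := R) (M := M)
  let tmulOne : M →ₛₗ[(Algebra.TensorProduct.includeLeftRingHom : R →+* R ⊗[K] B)] M ⊗[K] B :=
    { toFun := fun m => m ⊗ₜ 1
      map_add' := fun m n => add_tmul m n 1
      map_smul' := fun r m => by simp [tmul_smul_tmul_eq] }
  set N := Submodule.span (R ⊗[K] B) (tmulOne '' s)
  have hcomap : N.comap tmulOne = ⊤ :=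
    top_le_iff.mp <| hs ▸ Submodule.span_le.mpr fun m hm =>
      Submodule.subset_span (Set.mem_image_of_mem _ hm)
  have htmul (m : M) (b : B) : m ⊗ₜ[K] b ∈ N := by
    have hsmul : ((1 : R) ⊗ₜ[K] b) • tmulOne m = m ⊗ₜ[K] b :=
      (tmul_smul_tmul_eq 1 b m 1).trans (by rw [one_smul, mul_one])
    exact hsmul ▸ N.smul_mem _ (hcomap ▸ Submodule.mem_top : m ∈ N.comap tmulOne)
  have hN : N = ⊤ := eq_top_iff.mpr fun z _ => by
    induction z with
    | zero => exact zero_mem N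
    | tmul m b => exact htmul m b
    | add y z hy hz => exact add_mem (hy trivial) (hz trivial)
  exact ⟨hN ▸ Submodule.fg_span (s.finite_toSet.image _)⟩

theorem isNoetherian_tensorModule [Algebra.FiniteType K R] [Algebra.FiniteType K B]
    [Module.Finite R M] : IsNoetherian (R ⊗[K] B) (M ⊗[K] B) := by
  have : Algebra.FiniteType K (R ⊗[K] B) :=
    Algebra.FiniteType.trans (S := R) inferInstance inferInstance
  have : IsNoetherianRing (R ⊗[K] B) := Algebra.FiniteType.isNoetherianRing K _
  have := finite_tensorModule (K := K) (R := R) (M := M) (B := B)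
  infer_instance

theorem isFinitelyGeneratedOver_ker_e [CharZero K] [Algebra.FiniteType K R] [Module.Finite R M]
    {h e f : Module.End K R} {h' e' f' : Module.End K M} (T : IsIntegrableSl2Triple h e f)
    (T' : IsIntegrableSl2Triple h' e' f') (he : IsLeibniz e e') (hf : IsLeibniz f f') :
    IsFinitelyGeneratedOver (LinearMap.ker e : Set R) (LinearMap.ker e' : Set M) := by
  have TB := isIntegrableSl2Triple_binary K
  let ε : MvPolynomial (Fin 2) K →ₐ[K] K := aeval ![(0 : K), 1]
  have hε : ε.toLinearMap ∘ₗ (binaryRaising K : Module.End K (MvPolynomial (Fin 2) K)) = 0 :=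
    LinearMap.ext (aeval_binaryRaising K)
  have hlowest (n : ℕ) : ∃ w, binaryWeight K w = (-n : K) • w ∧ binaryLowering K w = 0 ∧ ε w = 1 :=
    ⟨X 1 ^ n, binaryWeight_X_one_pow K n, binaryLowering_X_one_pow K n, by simp [ε]⟩
  have hnoeth := isNoetherian_tensorModule (K := K) (R := R) (M := M) (B := MvPolynomial (Fin 2) K)
  have hfg := (T.tensorProduct TB).isFinitelyGeneratedOver_ker_inf_ker (T'.tensorProduct TB)
    (he.tensorAct (isLeibniz_derivation (binaryRaising K)))
    (hf.tensorAct (isLeibniz_derivation (binaryLowering K)))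
  rw [← T.map_evalRight_ker_inf_ker TB hε hlowest, ← T'.map_evalRight_ker_inf_ker TB hε hlowest]
  exact hfg.image (evalRight R ε.toLinearMap) (evalRight M ε.toLinearMap).toAddMonoidHom
    (evalRight_smul ε)

end TensorModule

end Transfer

section CommutatorIdeal

variable {K A : Type*} [Field K] [Ring A] [Algebra K A] {X : Set A} {N : Submodule K A}

theorem mul_mem_left_of_adjoin_eq_top (hX : Algebra.adjoin K X = ⊤)
    (hXN : ∀ x ∈ X, ∀ n ∈ N, x * n ∈ N) (a : A) {n : A} (hn : n ∈ N) : a * n ∈ N := by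
  have htop : (N.compatibleMaps N).comap (LinearMap.mul K A) = ⊤ :=
    eq_top_of_adjoin_eq_top hX (fun n hn => by simpa using hn)
      (fun a b ha hb n hn => by simpa [mul_assoc] using ha (hb hn)) fun x hx n hn => hXN x hx n hn
  exact (htop ▸ Submodule.mem_top : a ∈ (N.compatibleMaps N).comap (LinearMap.mul K A)) hn

theorem mul_mem_right_of_adjoin_eq_top (hX : Algebra.adjoin K X = ⊤)
    (hXN : ∀ x ∈ X, ∀ n ∈ N, n * x ∈ N) (a : A) {n : A} (hn : n ∈ N) : n * a ∈ N := by
  have htop : (N.compatibleMaps N).comap (LinearMap.mul K A).flip = ⊤ :=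
    eq_top_of_adjoin_eq_top hX (fun n hn => by simpa using hn)
      (fun a b ha hb n hn => by simpa [mul_assoc] using hb (ha hn)) fun x hx n hn => hXN x hx n hn
  exact (htop ▸ Submodule.mem_top : a ∈ (N.compatibleMaps N).comap (LinearMap.mul K A).flip) hn

theorem commutator_mem_of_adjoin_eq_top (hX : Algebra.adjoin K X = ⊤)
    (hl : ∀ a, ∀ n ∈ N, a * n ∈ N) (hr : ∀ a, ∀ n ∈ N, n * a ∈ N) {a : A}
    (hXa : ∀ x ∈ X, x * a - a * x ∈ N) (b : A) : b * a - a * b ∈ N := by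
  have htop : N.comap (LinearMap.mulRight K a - LinearMap.mulLeft K a) = ⊤ := by
    refine eq_top_of_adjoin_eq_top hX (by simp) (fun b c hb hc => ?_) hXa
    have hbc : b * c * a - a * (b * c) = (b * a - a * b) * c + b * (c * a - a * c) := by
      noncomm_ring
    have hadd := add_mem (hr c _ hb) (hl b _ hc)
    exact (hbc ▸ hadd : b * c * a - a * (b * c) ∈ N)
  exact (htop ▸ Submodule.mem_top :
    b ∈ N.comap (LinearMap.mulRight K a - LinearMap.mulLeft K a))

theorem mul_commutator_mul_mem_of_adjoin_eq_top (hX : Algebra.adjoin K X = ⊤)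
    (hl : ∀ x ∈ X, ∀ n ∈ N, x * n ∈ N) (hr : ∀ x ∈ X, ∀ n ∈ N, n * x ∈ N)
    (hcomm : ∀ x ∈ X, ∀ y ∈ X, x * y - y * x ∈ N) (a b c e : A) :
    a * (b * c - c * b) * e ∈ N := by
  have hl' (a : A) : ∀ n ∈ N, a * n ∈ N := fun _ => mul_mem_left_of_adjoin_eq_top hX hl a
  have hr' (a : A) : ∀ n ∈ N, n * a ∈ N := fun _ => mul_mem_right_of_adjoin_eq_top hX hr a
  have hXb (x) (hx : x ∈ X) : x * c - c * x ∈ N := by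
    rw [← neg_mem_iff, neg_sub]
    exact commutator_mem_of_adjoin_eq_top hX hl' hr' (fun y hy => hcomm y hy x hx) c
  exact hr' e _ (hl' a _ (commutator_mem_of_adjoin_eq_top hX hl' hr' hXb b))

theorem IsLeibniz.apply_mul_commutator_mul {D : Module.End K A} (hD : IsLeibniz D D)
    (a b c e : A) :
    D (a * (b * c - c * b) * e) =
      D a * (b * c - c * b) * e + a * (D b * c - c * D b) * e + a * (b * D c - D c * b) * e +
        a * (b * c - c * b) * D e := by
  have hmul (a b : A) : D (a * b) = D a * b + a * D b := hD a b
  rw [hmul, hmul a, map_sub, hmul b c, hmul c b]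
  noncomm_ring

end CommutatorIdeal

section Metabelian

variable {K : Type} [Field K] {d : ℕ}

theorem commutator_mul_commutator (a b c e : F K d) :
    (a * b - b * a) * (c * e - e * c) = 0 := by
  obtain ⟨a, rfl⟩ := RingQuot.mkAlgHom_surjective K (metaRel K d) a
  obtain ⟨b, rfl⟩ := RingQuot.mkAlgHom_surjective K (metaRel K d) b
  obtain ⟨c, rfl⟩ := RingQuot.mkAlgHom_surjective K (metaRel K d) c
  obtain ⟨e, rfl⟩ := RingQuot.mkAlgHom_surjective K (metaRel K d) e
  simpa using RingQuot.mkAlgHom_rel K (s := metaRel K d) ⟨rfl, a, b, c, e, rfl⟩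

theorem adjoin_range_xb : Algebra.adjoin K (Set.range (xb K d)) = ⊤ := by
  have hrange : Set.range (xb K d) =
      RingQuot.mkAlgHom K (metaRel K d) '' Set.range (FreeAlgebra.ι K) := by
    rw [← Set.range_comp]
    rfl
  rw [hrange, ← AlgHom.map_adjoin, FreeAlgebra.adjoin_range_ι, Algebra.map_top]
  exact (AlgHom.range_eq_top _).mpr (RingQuot.mkAlgHom_surjective K (metaRel K d))

theorem range_pair_zero_union_range_pair_one {J Z : Type*} (z : J × Fin 2 → Z) :
    (Set.range fun j => z (j, 0)) ∪ (Set.range fun j => z (j, 1)) = Set.range z := by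
  ext
  simp [Fin.exists_fin_two, exists_or]

theorem commutator_mul_commutator_trivSqZeroExt {A : Type*} [Ring A]
    (hA : ∀ a b c e : A, (a * b - b * a) * (c * e - e * c) = 0) (a b c e : TrivSqZeroExt A A) :
    (a * b - b * a) * (c * e - e * c) = 0 := by
  ext
  · simp [hA]
  · calc ((a * b - b * a) * (c * e - e * c)).snd
      _ = (a.fst * b.fst - b.fst * a.fst) * (c.fst * e.snd - e.snd * c.fst) +
          (a.fst * b.fst - b.fst * a.fst) * (c.snd * e.fst - e.fst * c.snd) +
          (a.fst * b.snd - b.snd * a.fst) * (c.fst * e.fst - e.fst * c.fst) +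
          (a.snd * b.fst - b.fst * a.snd) * (c.fst * e.fst - e.fst * c.fst) := by
        simp only [TrivSqZeroExt.snd_mul, TrivSqZeroExt.snd_sub, TrivSqZeroExt.fst_sub,
          TrivSqZeroExt.fst_mul, smul_eq_mul, MulOpposite.smul_eq_mul_unop, MulOpposite.unop_op]
        noncomm_ring
      _ = 0 := by simp only [hA, add_zero]

-- A derivation `D` of `F` is the same as an algebra section `a ↦ a + ε D a` of `F[ε] → F`.
theorem exists_isLeibniz_xb_eq (w : ι d → F K d) :
    ∃ D : Module.End K (F K d), IsLeibniz D D ∧ ∀ j, D (xb K d j) = w j := by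
  let φ : P K d →ₐ[K] TrivSqZeroExt (F K d) (F K d) :=
    FreeAlgebra.lift K fun j => TrivSqZeroExt.inl (xb K d j) + TrivSqZeroExt.inr (w j)
  have hφ : ∀ ⦃p q : P K d⦄, metaRel K d p q → φ p = φ q := by
    rintro p q ⟨rfl, a, b, c, e, rfl⟩
    simp only [map_mul, map_sub, map_zero]
    exact commutator_mul_commutator_trivSqZeroExt commutator_mul_commutator _ _ _ _
  let ψ : F K d →ₐ[K] TrivSqZeroExt (F K d) (F K d) := RingQuot.liftAlgHom K ⟨φ, hφ⟩
  have hψ (j) : ψ (xb K d j) = TrivSqZeroExt.inl (xb K d j) + TrivSqZeroExt.inr (w j) := by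
    simp only [ψ, xb, RingQuot.liftAlgHom_mkAlgHom_apply, φ, FreeAlgebra.lift_ι_apply]
  have hfst : (TrivSqZeroExt.fstHom K (F K d) (F K d)).comp ψ = AlgHom.id K (F K d) :=
    AlgHom.ext_of_adjoin_eq_top adjoin_range_xb <| by
      rintro _ ⟨j, rfl⟩
      simp [hψ]
  have hfst (a) : (ψ a).fst = a := AlgHom.congr_fun hfst a
  refine ⟨(TrivSqZeroExt.sndHom (F K d) (F K d)).restrictScalars K ∘ₗ ψ.toLinearMap,
    fun a b => ?_, fun j => ?_⟩
  · change (ψ (a * b)).snd = (ψ a).snd * b + a * (ψ b).snd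
    rw [map_mul, TrivSqZeroExt.snd_mul, hfst, hfst, smul_eq_mul, MulOpposite.smul_eq_mul_unop,
      MulOpposite.unop_op, add_comm]
  · change (ψ (xb K d j)).snd = w j
    rw [hψ, TrivSqZeroExt.snd_add, TrivSqZeroExt.snd_inl, TrivSqZeroExt.snd_inr, zero_add]

theorem commutator_mem_F' (a b : F K d) : a * b - b * a ∈ F' K d :=
  Submodule.subset_span ⟨1, a, b, 1, by simp⟩

theorem IsLeibniz.map_mem_F' {D : Module.End K (F K d)} (hD : IsLeibniz D D) :
    ∀ a ∈ F' K d, D a ∈ F' K d := by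
  suffices hle : F' K d ≤ (F' K d).comap D from hle
  refine Submodule.span_le.mpr ?_
  rintro _ ⟨a, b, c, e, rfl⟩
  have hmem (a b c e : F K d) : a * (b * c - c * b) * e ∈ F' K d :=
    Submodule.subset_span ⟨a, b, c, e, rfl⟩
  rw [SetLike.mem_coe, Submodule.mem_comap, hD.apply_mul_commutator_mul]
  exact add_mem (add_mem (add_mem (hmem _ _ _ _) (hmem _ _ _ _)) (hmem _ _ _ _)) (hmem _ _ _ _)

theorem isLeibniz_of_X {σ M : Type*} [AddCommGroup M] [Module K M] [Module (MvPolynomial σ K) M]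
    [IsScalarTower K (MvPolynomial σ K) M]
    {D : Derivation K (MvPolynomial σ K) (MvPolynomial σ K)} {D' : Module.End K M}
    (hX : ∀ i m, D' ((X i : MvPolynomial σ K) • m) =
      D (X i) • m + (X i : MvPolynomial σ K) • D' m) :
    IsLeibniz (D : Module.End K (MvPolynomial σ K)) D' := by
  intro p m
  induction p using MvPolynomial.induction_on generalizing m with
  | C c =>
    have hC (n : M) : (C c : MvPolynomial σ K) • n = c • n := algebraMap_smul _ c n
    simp [hC]
  | add p q hp hq =>
    simp only [add_smul, map_add, hp, hq]
    abel
  | mul_X p i hp =>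
    simp only [mul_smul, hp, hX, Derivation.coeFn_coe, Derivation.leibniz, smul_eq_mul, add_smul,
      smul_add]
    rw [smul_comm (X i : MvPolynomial σ K)]
    abel

/-- The action of `S` on `F'` by `u_j f = x̄_j f` and `v_j f = [f, x̄_j]`. -/
structure IsCommutatorAction (K : Type) [Field K] (d : ℕ) [Module (S K d) (F' K d)] : Prop where
  C_smul (c : K) (f : F' K d) : (C c : S K d) • f = c • f
  X_inl_smul (j : ι d) (f : F' K d) :
    (((X (Sum.inl j) : S K d) • f : F' K d) : F K d) = xb K d j * f
  X_inr_smul (j : ι d) (f : F' K d) :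
    (((X (Sum.inr j) : S K d) • f : F' K d) : F K d) = f * xb K d j - xb K d j * f

namespace IsCommutatorAction

variable [Module (S K d) (F' K d)]

theorem isScalarTower (hS : IsCommutatorAction K d) : IsScalarTower K (S K d) (F' K d) :=
  ⟨fun c s f => by rw [MvPolynomial.smul_eq_C_mul, mul_smul, hS.C_smul]⟩

theorem finite (hS : IsCommutatorAction K d) : Module.Finite (S K d) (F' K d) := by
  have := hS.isScalarTower
  let g (j : ι d × ι d) : F' K d :=
    ⟨xb K d j.1 * xb K d j.2 - xb K d j.2 * xb K d j.1, commutator_mem_F' _ _⟩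
  let G : Submodule (S K d) (F' K d) := Submodule.span (S K d) (Set.range g)
  let N : Submodule K (F K d) := (G.restrictScalars K).map (F' K d).subtype
  have hl : ∀ x ∈ Set.range (xb K d), ∀ n ∈ N, x * n ∈ N := by
    rintro _ ⟨j, rfl⟩ _ ⟨n, hn, rfl⟩
    exact ⟨(X (Sum.inl j) : S K d) • n, G.smul_mem _ hn, hS.X_inl_smul j n⟩
  have hr : ∀ x ∈ Set.range (xb K d), ∀ n ∈ N, n * x ∈ N := by
    rintro _ ⟨j, rfl⟩ _ ⟨n, hn, rfl⟩
    refine ⟨(X (Sum.inr j) : S K d) • n + (X (Sum.inl j) : S K d) • n,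
      G.add_mem (G.smul_mem _ hn) (G.smul_mem _ hn), ?_⟩
    simp [hS.X_inl_smul, hS.X_inr_smul]
  have hcomm : ∀ x ∈ Set.range (xb K d), ∀ y ∈ Set.range (xb K d), x * y - y * x ∈ N := by
    rintro _ ⟨i, rfl⟩ _ ⟨j, rfl⟩
    exact ⟨g (i, j), Submodule.subset_span ⟨(i, j), rfl⟩, rfl⟩
  have hF'N : F' K d ≤ N := Submodule.span_le.mpr <| by
    rintro _ ⟨a, b, c, e, rfl⟩
    exact mul_commutator_mul_mem_of_adjoin_eq_top adjoin_range_xb hl hr hcomm a b c e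
  have hG : G = ⊤ := eq_top_iff.mpr fun f _ => by
    obtain ⟨n, hn, hnf⟩ := hF'N f.2
    exact Subtype.ext hnf ▸ hn
  exact ⟨hG ▸ Submodule.fg_span (Set.finite_range g)⟩

theorem isLeibniz_restrict (hS : IsCommutatorAction K d) {D : Module.End K (F K d)}
    (hD : IsLeibniz D D) {DS : Derivation K (S K d) (S K d)}
    (hu : ∀ j (f : F' K d), ((DS (X (Sum.inl j)) • f : F' K d) : F K d) = D (xb K d j) * f)
    (hv : ∀ j (f : F' K d), ((DS (X (Sum.inr j)) • f : F' K d) : F K d) =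
      f * D (xb K d j) - D (xb K d j) * f) :
    IsLeibniz (M := F' K d) (DS : Module.End K (S K d)) (D.restrict hD.map_mem_F') := by
  have := hS.isScalarTower
  have hmul (a b : F K d) : D (a * b) = D a * b + a * D b := hD a b
  refine isLeibniz_of_X fun j f => Subtype.ext ?_
  rcases j with j | j
  · simp [hS.X_inl_smul, hu, hmul]
  · simp only [LinearMap.coe_restrict_apply, Submodule.coe_add, hS.X_inr_smul, hv, map_sub, hmul]
    noncomm_ring

end IsCommutatorAction

/-- The lowering operator `∑ u_{2i} ∂/∂u_{2i-1} + ∑ v_{2i} ∂/∂v_{2i-1}` on `S`. -/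
noncomputable def polynomialLowering (K : Type) [Field K] (d : ℕ) :
    Derivation K (S K d) (S K d) :=
  mkDerivation K (Sum.elim (fun j => ![X (Sum.inl (j.1, 1)), 0] j.2)
    fun j => ![X (Sum.inr (j.1, 1)), 0] j.2)

theorem isIntegrableSl2Triple_polynomial {δS : Derivation K (S K d) (S K d)}
    (hu0 : ∀ i, δS (X (Sum.inl (i, 0))) = 0)
    (hu1 : ∀ i, δS (X (Sum.inl (i, 1))) = X (Sum.inl (i, 0)))
    (hv0 : ∀ i, δS (X (Sum.inr (i, 0))) = 0)
    (hv1 : ∀ i, δS (X (Sum.inr (i, 1))) = X (Sum.inr (i, 0))) :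
    IsIntegrableSl2Triple (⁅δS, polynomialLowering K d⁆ : Derivation K (S K d) (S K d))
      (δS : Module.End K (S K d)) (polynomialLowering K d : Module.End K (S K d)) := by
  let z : (Fin d ⊕ Fin d) × Fin 2 → S K d := X ∘ Equiv.sumProdDistrib (Fin d) (Fin d) (Fin 2)
  have hgen : Algebra.adjoin K ((Set.range fun i => z (i, 0)) ∪ Set.range fun i => z (i, 1)) =
      ⊤ := by
    rw [range_pair_zero_union_range_pair_one, EquivLike.range_comp, adjoin_range_X]
  refine .of_adjoin_eq_top hgen (isLeibniz_derivation _) (isLeibniz_derivation _) ?_ ?_ ?_ ?_ <;>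
    rintro (i | i) <;>
    simp [z, polynomialLowering, mkDerivation_X, hu0, hu1, hv0, hv1]

theorem exists_isIntegrableSl2Triple {δ : Module.End K (F K d)} (hδ : IsLeibniz δ δ)
    (hδ0 : ∀ i, δ (xb K d (i, 0)) = 0) (hδ1 : ∀ i, δ (xb K d (i, 1)) = xb K d (i, 0)) :
    ∃ f : Module.End K (F K d), IsLeibniz f f ∧ (∀ i, f (xb K d (i, 0)) = xb K d (i, 1)) ∧
      (∀ i, f (xb K d (i, 1)) = 0) ∧ IsIntegrableSl2Triple (δ * f - f * δ) δ f := by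
  obtain ⟨f, hf, hfx⟩ := exists_isLeibniz_xb_eq (fun j : ι d => ![xb K d (j.1, 1), 0] j.2)
  have hf0 (i) : f (xb K d (i, 0)) = xb K d (i, 1) := hfx (i, 0)
  have hf1 (i) : f (xb K d (i, 1)) = 0 := hfx (i, 1)
  refine ⟨f, hf, hf0, hf1, .of_adjoin_eq_top ?_ hδ hf hδ0 hδ1 hf0 hf1⟩
  rw [range_pair_zero_union_range_pair_one, adjoin_range_xb]

end Metabelian

/-- `(F')^δ` is a finitely generated module over `S^δ = ker δ_S`, where `F'` is an
`S`-module via `f·u_i = x̄_i f` and `f·v_i = [f, x̄_i]`. -/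
theorem stmt7 (K : Type) [Field K] [CharZero K] (d : ℕ) (hd : 1 ≤ d)
    [Module (S K d) ↥(F' K d)]
    (halg : ∀ (c : K) (f : ↥(F' K d)), (MvPolynomial.C c : S K d) • f = c • f)
    (hu : ∀ (i : ι d) (f : ↥(F' K d)),
      (↑((MvPolynomial.X (Sum.inl i) : S K d) • f) : F K d) = xb K d i * ↑f)
    (hv : ∀ (i : ι d) (f : ↥(F' K d)),
      (↑((MvPolynomial.X (Sum.inr i) : S K d) • f) : F K d)
        = ↑f * xb K d i - xb K d i * ↑f)
    (δ : F K d →ₗ[K] F K d)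
    (hder : ∀ a b : F K d, δ (a * b) = δ a * b + a * δ b)
    (hδ0 : ∀ i : Fin d, δ (xb K d (i, 0)) = 0)
    (hδ1 : ∀ i : Fin d, δ (xb K d (i, 1)) = xb K d (i, 0))
    (δS : Derivation K (S K d) (S K d))
    (hSu0 : ∀ i : Fin d, δS (X (Sum.inl (i, 0))) = 0)
    (hSu1 : ∀ i : Fin d, δS (X (Sum.inl (i, 1))) = X (Sum.inl (i, 0)))
    (hSv0 : ∀ i : Fin d, δS (X (Sum.inr (i, 0))) = 0)
    (hSv1 : ∀ i : Fin d, δS (X (Sum.inr (i, 1))) = X (Sum.inr (i, 0))) :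
    ∃ (k : ℕ) (g : Fin k → ↥(F' K d)),
      ∀ f : ↥(F' K d),
        δ (↑f : F K d) = 0 ↔
          ∃ c : Fin k → S K d, (∀ l, δS (c l) = 0) ∧ f = ∑ l, c l • g l := by
  have hS : IsCommutatorAction K d := ⟨halg, hu, hv⟩
  have := hS.isScalarTower
  have := hS.finite
  have hδ : IsLeibniz δ δ := hder
  obtain ⟨f, hf, hf0, hf1, TF⟩ := exists_isIntegrableSl2Triple hδ hδ0 hδ1
  have TS := isIntegrableSl2Triple_polynomial hSu0 hSu1 hSv0 hSv1
  have TF' := TF.restrict (hδ.commutator hf).map_mem_F' hδ.map_mem_F' hf.map_mem_F'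
  have hδleib : IsLeibniz (M := F' K d) (δS : Module.End K (S K d)) (δ.restrict hδ.map_mem_F') := by
    refine hS.isLeibniz_restrict hδ ?_ ?_ <;> rintro ⟨i, k⟩ a <;> fin_cases k <;>
      simp [hu, hv, hδ0, hδ1, hSu0, hSu1, hSv0, hSv1]
  have hfleib : IsLeibniz (M := F' K d) (polynomialLowering K d : Module.End K (S K d))
      (f.restrict hf.map_mem_F') := by
    refine hS.isLeibniz_restrict hf ?_ ?_ <;> rintro ⟨i, k⟩ a <;> fin_cases k <;>
      simp [hu, hv, hf0, hf1, polynomialLowering, mkDerivation_X]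
  obtain ⟨k, g, hg⟩ := isFinitelyGeneratedOver_ker_e TS TF' hδleib hfleib
  refine ⟨k, g, fun a => Iff.trans ?_ (hg a)⟩
  exact Subtype.ext_iff (a1 := δ.restrict hδ.map_mem_F' a) (a2 := 0) |>.symm

end Stmt7
end

section
/- The set M^δ = ker D is a finitely generated module over the ring S^δ = ker δ_S. -/
open MvPolynomial

namespace Stmt8

/-- Index type for `{1, …, 2d}`: `(i, 0)` stands for `2i-1` and `(i, 1)` for `2i`. -/
abbrev ι (d : ℕ) : Type := Fin d × Fin 2

/-- The polynomial ring `S = K[u_1, …, u_{2d}, v_1, …, v_{2d}]`; the variable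
`X (Sum.inl j)` is `u_j` and `X (Sum.inr j)` is `v_j`. -/
abbrev S (K : Type) [Field K] (d : ℕ) : Type := MvPolynomial (ι d ⊕ ι d) K

/-- The free `S`-module `M` with basis `a_1, …, a_{2d}`. -/
abbrev M (K : Type) [Field K] (d : ℕ) : Type := ι d → S K d

/-- The basis element `a_j` of `M`. -/
noncomputable def a (K : Type) [Field K] (d : ℕ) (j : ι d) : M K d := Pi.single j 1

/-!
An element `∑ i, (f i • a (i, 0) + g i • a (i, 1))` lies in `ker D` iff `g i = -δ (f i)` and
`δ (δ (f i)) = 0` for all `i`, so `ker D` is a finite direct sum of copies of `ker δ²` and it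
suffices that `ker δ²` is finitely generated over `ker δ`. Since `δ` maps `ker δ²` onto
`im δ ∩ ker δ` with kernel `ker δ`, the claim reduces to: `im δ ∩ ker δ` is generated by the
variables `y j = δ (x j)`.

Let `∂ j` be the partial derivative in `y j` and `L = ∑ j, y j ∂ j`. Then `⁅L, δ⁆ = δ`,
`⁅∂ j, L⁆ = ∂ j` and `⁅δ, ⁅δ, ∂ j⁆⁆ = 0`. Given `g` with `δ² g = 0`, solve `L h + 2 h = g`, which
is possible because `L` acts diagonally on monomials with eigenvalues in `ℕ`. The commutation rules
give `δ g = ∑ j, y j * c j` with `c j = 2 ∂ j (δ h) - δ (∂ j h)`, and `δ (c j) = ∂ j (δ² h)`.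
Finally `L (δ² h) = δ² g = 0` says that `δ² h` does not involve the `y j`, so `δ (c j) = 0`.
-/

section Constants

variable {R A : Type*} [CommRing R] [CommRing A] [Algebra R A] (δ : Derivation R A A)

/-- The ring of constants `A^δ = ker δ` of a derivation `δ` of `A`. -/
def constants : Subalgebra R A where
  carrier := {f | δ f = 0}
  mul_mem' {f g} (hf : δ f = 0) (hg : δ g = 0) := by simp [hf, hg]
  add_mem' {f g} (hf : δ f = 0) (hg : δ g = 0) := by simp [hf, hg]
  algebraMap_mem' := δ.map_algebraMap

variable {δ} in
theorem mem_constants {f : A} : f ∈ constants δ ↔ δ f = 0 := Iff.rfl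

/-- A derivation, regarded as a linear map over its ring of constants. -/
def constantsLinearMap : A →ₗ[constants δ] A where
  toFun := δ
  map_add' := δ.map_add
  map_smul' c f := by simp [Subalgebra.smul_def, mem_constants.1 c.2]

@[simp]
theorem constantsLinearMap_apply (f : A) : constantsLinearMap δ f = δ f := rfl

theorem fg_ker_constantsLinearMap : (LinearMap.ker (constantsLinearMap δ)).FG := by
  refine ⟨{1}, le_antisymm ?_ fun f hf => ?_⟩
  · simp
  · rw [Finset.coe_singleton, Submodule.mem_span_singleton]
    exact ⟨⟨f, hf⟩, mul_one f⟩

end Constants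

theorem fg_ker_comp_self {C N : Type*} [Ring C] [AddCommGroup N] [Module C N] {f : N →ₗ[C] N}
    (hker : (LinearMap.ker f).FG) (hinf : (LinearMap.range f ⊓ LinearMap.ker f).FG) :
    (LinearMap.ker (f ∘ₗ f)).FG := by
  refine Submodule.fg_of_fg_map_of_fg_inf_ker f ?_ ?_
  · rwa [LinearMap.ker_comp, Submodule.map_comap_eq]
  · rwa [inf_eq_right.2 (LinearMap.ker_le_ker_comp f f)]

section Commutators

variable {R A : Type*} [CommRing R] [CommRing A] [Algebra R A] {δ L pd : Derivation R A A}

theorem map_two_smul_sub_of_commutator_commutator_eq_zero (hpd : ⁅δ, ⁅δ, pd⁆⁆ = 0) (h : A) :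
    δ (2 • pd (δ h) - δ (pd h)) = pd (δ (δ h)) := by
  have hcomm := DFunLike.congr_fun hpd h
  simp only [Derivation.commutator_apply, Derivation.zero_apply, map_sub] at hcomm
  rw [map_sub, map_nsmul]
  linear_combination -hcomm

theorem apply_sq_of_commutator_eq_right (hL : ⁅L, δ⁆ = δ) (h : A) :
    L (δ (δ h)) = δ (δ (L h + 2 • h)) := by
  have hcomm (f : A) : L (δ f) = δ (L f) + δ f := by
    rw [← sub_eq_iff_eq_add']
    exact DFunLike.congr_fun hL f
  simp only [hcomm, map_add, map_nsmul]
  abel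

theorem apply_eq_zero_of_commutator_eq_left (hL : ⁅pd, L⁆ = pd)
    (hinj : Function.Injective fun f => L f + 1 • f) {f : A} (hf : L f = 0) : pd f = 0 := by
  have hcomm : pd (L f) - L (pd f) = pd f := DFunLike.congr_fun hL f
  rw [hf, map_zero, zero_sub] at hcomm
  apply hinj
  simp only [one_smul, map_zero, add_zero]
  linear_combination -hcomm

end Commutators

section Polynomial

variable {R σ J : Type*} [CommRing R]

section Euler

variable [Fintype J]

/-- The Euler derivation of a polynomial ring in the variables `X (y j)`: it multiplies a polynomial
which is homogeneous of degree `n` in these variables by `n`. -/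
noncomputable def partialEuler (R : Type*) [CommRing R] (y : J → σ) :
    Derivation R (MvPolynomial σ R) (MvPolynomial σ R) :=
  ∑ j, (X (y j) : MvPolynomial σ R) • pderiv (y j)

variable (y : J → σ)

theorem partialEuler_apply (f : MvPolynomial σ R) :
    partialEuler R y f = ∑ j, X (y j) * pderiv (y j) f := by
  simpa only [Finset.sum_apply] using! congrFun (map_sum Derivation.coeFnAddMonoidHom
    (fun j => (X (y j) : MvPolynomial σ R) • pderiv (y j)) Finset.univ) f

theorem partialEuler_monomial (t : σ →₀ ℕ) (r : R) :
    partialEuler R y (monomial t r) = (∑ j, t (y j)) • monomial t r := by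
  simp only [partialEuler_apply, X_mul_pderiv_monomial, Finset.sum_smul]

theorem partialEuler_X (s : σ) :
    partialEuler R y (X s) = (∑ j, Finsupp.single s 1 (y j)) • (X s : MvPolynomial σ R) :=
  partialEuler_monomial y _ _

theorem coeff_partialEuler (f : MvPolynomial σ R) (t : σ →₀ ℕ) :
    coeff t (partialEuler R y f) = (∑ j, t (y j)) • coeff t f := by
  classical
  induction f using MvPolynomial.induction_on' with
  | monomial u r =>
    rw [partialEuler_monomial, coeff_smul, coeff_monomial]
    split_ifs with hut
    · rw [hut]
    · simp only [smul_zero]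
  | add p q hp hq => simp only [map_add, coeff_add, hp, hq, smul_add]

theorem bijective_partialEuler_add_smul [Algebra ℚ R] {n : ℕ} (hn : n ≠ 0) :
    Function.Bijective fun f : MvPolynomial σ R => partialEuler R y f + n • f := by
  have hunit (t : σ →₀ ℕ) : ((∑ j, t (y j) + n : ℕ) : ℚ) ≠ 0 := by
    exact_mod_cast (by omega : ∑ j, t (y j) + n ≠ 0)
  constructor
  · intro f g hfg
    ext t
    have hcoeff := congrArg (coeff t) hfg
    simp only [coeff_add, coeff_partialEuler, coeff_smul, ← add_smul] at hcoeff
    simpa only [← Nat.cast_smul_eq_nsmul ℚ, smul_right_inj (hunit t)] using hcoeff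
  · intro g
    induction g using MvPolynomial.induction_on' with
    | monomial t r =>
      refine ⟨monomial t (((∑ j, t (y j) + n : ℕ) : ℚ)⁻¹ • r), ?_⟩
      simp only [partialEuler_monomial, ← add_smul]
      rw [← map_nsmul, ← Nat.cast_smul_eq_nsmul ℚ, smul_inv_smul₀ (hunit t)]
    | add p q hp hq =>
      obtain ⟨p', rfl⟩ := hp
      obtain ⟨q', rfl⟩ := hq
      exact ⟨p' + q', by simp only [map_add, smul_add]; abel⟩

variable {y}

theorem partialEuler_X_self (hy : Function.Injective y) (j : J) :
    partialEuler R y (X (y j)) = X (y j) := by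
  classical simp [partialEuler_X, Finsupp.single_apply, hy.eq_iff]

theorem partialEuler_X_of_notMem {s : σ} (hs : s ∉ Set.range y) :
    partialEuler R y (X s) = 0 := by
  simp_all [partialEuler_X, eq_comm]

theorem commutator_pderiv_partialEuler (hy : Function.Injective y) (j : J) :
    ⁅pderiv (R := R) (y j), partialEuler R y⁆ = pderiv (y j) := by
  classical
  refine derivation_ext fun s => ?_
  have hconst : partialEuler R y (pderiv (y j) (X s)) = 0 := by
    rw [pderiv_X, Pi.single_apply]
    split_ifs <;> simp
  rw [Derivation.commutator_apply, hconst, sub_zero]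
  by_cases hs : s ∈ Set.range y
  · obtain ⟨i, rfl⟩ := hs
    rw [partialEuler_X_self hy]
  · rw [partialEuler_X_of_notMem hs, pderiv_X_of_ne (fun h => hs ⟨j, h.symm⟩), map_zero]

end Euler

/-- The derivation `δ` of a polynomial ring maps each variable `X (x j)` to the constant variable
`X (y j)` and kills all other variables: it is a linear derivation in Jordan form whose blocks have
size at most two. -/
structure IsTwoStepBasic (δ : Derivation R (MvPolynomial σ R) (MvPolynomial σ R))
    (x y : J → σ) : Prop where
  map_X_left (j : J) : δ (X (x j)) = X (y j)
  map_X_of_notMem (s : σ) (hs : s ∉ Set.range x) : δ (X s) = 0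
  right_notMem (j : J) : y j ∉ Set.range x
  right_injective : Function.Injective y

namespace IsTwoStepBasic

variable {δ : Derivation R (MvPolynomial σ R) (MvPolynomial σ R)} {x y : J → σ}

theorem map_X_right (hδ : IsTwoStepBasic δ x y) (j : J) : δ (X (y j)) = 0 :=
  hδ.map_X_of_notMem _ (hδ.right_notMem j)

theorem commutator_commutator_pderiv (hδ : IsTwoStepBasic δ x y) (s : σ) :
    ⁅δ, ⁅δ, pderiv (R := R) s⁆⁆ = 0 := by
  classical
  have hconst (t : σ) : δ (pderiv s (X t)) = 0 := by
    rw [pderiv_X, Pi.single_apply]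
    split_ifs <;> simp
  refine derivation_ext fun t => ?_
  by_cases ht : t ∈ Set.range x
  · obtain ⟨j, rfl⟩ := ht
    simp only [Derivation.commutator_apply, hconst, hδ.map_X_left, hδ.map_X_right, map_zero,
      zero_sub, map_neg, neg_zero, Derivation.zero_apply]
  · simp only [Derivation.commutator_apply, hconst, hδ.map_X_of_notMem t ht, map_zero,
      sub_zero, Derivation.zero_apply]

theorem commutator_partialEuler_self [Fintype J] (hδ : IsTwoStepBasic δ x y) :
    ⁅partialEuler R y, δ⁆ = δ := by
  refine derivation_ext fun s => ?_
  rw [Derivation.commutator_apply]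
  by_cases hs : s ∈ Set.range x
  · obtain ⟨j, rfl⟩ := hs
    have hj : x j ∉ Set.range y := fun ⟨i, hi⟩ => hδ.right_notMem i ⟨j, hi.symm⟩
    rw [hδ.map_X_left, partialEuler_X_self hδ.right_injective, partialEuler_X_of_notMem hj,
      map_zero, sub_zero]
  · simp only [partialEuler_X, map_nsmul, hδ.map_X_of_notMem s hs, map_zero, smul_zero, sub_zero]

theorem map_partialEuler_add_two_smul [Fintype J] (hδ : IsTwoStepBasic δ x y)
    (h : MvPolynomial σ R) : δ (partialEuler R y h + 2 • h) =
      ∑ j, X (y j) * (2 • pderiv (y j) (δ h) - δ (pderiv (y j) h)) := by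
  have hcomm : partialEuler R y (δ h) - δ (partialEuler R y h) = δ h :=
    DFunLike.congr_fun hδ.commutator_partialEuler_self h
  have hmap : δ (partialEuler R y h) = ∑ j, X (y j) * δ (pderiv (y j) h) := by
    simp [partialEuler_apply, hδ.map_X_right]
  simp only [mul_sub, mul_smul_comm, Finset.sum_sub_distrib, ← Finset.smul_sum,
    ← partialEuler_apply, ← hmap, map_add, map_nsmul]
  linear_combination -2 * hcomm

theorem range_inf_ker_eq_span [Algebra ℚ R] [Finite J] (hδ : IsTwoStepBasic δ x y) :
    LinearMap.range (constantsLinearMap δ) ⊓ LinearMap.ker (constantsLinearMap δ) =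
      Submodule.span (constants δ) (Set.range fun j => X (y j)) := by
  have := Fintype.ofFinite J
  apply le_antisymm
  · rintro _ ⟨⟨g, rfl⟩, hg : δ (δ g) = 0⟩
    obtain ⟨h, rfl⟩ := (bijective_partialEuler_add_smul y two_ne_zero).surjective g
    have hh : partialEuler R y (δ (δ h)) = 0 :=
      (apply_sq_of_commutator_eq_right hδ.commutator_partialEuler_self h).trans hg
    have hc (j : J) : δ (2 • pderiv (y j) (δ h) - δ (pderiv (y j) h)) = 0 := by
      rw [map_two_smul_sub_of_commutator_commutator_eq_zero (hδ.commutator_commutator_pderiv _)]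
      exact apply_eq_zero_of_commutator_eq_left
        (commutator_pderiv_partialEuler hδ.right_injective j)
        (bijective_partialEuler_add_smul y one_ne_zero).injective hh
    refine (Submodule.mem_span_range_iff_exists_fun _).2 ⟨fun j => ⟨_, hc j⟩, ?_⟩
    simp only [constantsLinearMap_apply, hδ.map_partialEuler_add_two_smul, Subalgebra.smul_def,
      smul_eq_mul, mul_comm]
  · rw [Submodule.span_le]
    rintro _ ⟨j, rfl⟩
    exact ⟨⟨X (x j), hδ.map_X_left j⟩, hδ.map_X_right j⟩

theorem fg_ker_sq [Algebra ℚ R] [Finite J] (hδ : IsTwoStepBasic δ x y) :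
    (LinearMap.ker (constantsLinearMap δ ∘ₗ constantsLinearMap δ)).FG := by
  refine fg_ker_comp_self (fg_ker_constantsLinearMap δ) ?_
  rw [hδ.range_inf_ker_eq_span]
  exact Submodule.fg_span (Set.finite_range _)

end IsTwoStepBasic

theorem isTwoStepBasic_sum_prod {α β : Type*}
    {δ : Derivation R (MvPolynomial (α × Fin 2 ⊕ β × Fin 2) R)
      (MvPolynomial (α × Fin 2 ⊕ β × Fin 2) R)}
    (hu0 : ∀ i, δ (X (Sum.inl (i, 0))) = 0)
    (hu1 : ∀ i, δ (X (Sum.inl (i, 1))) = X (Sum.inl (i, 0)))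
    (hv0 : ∀ i, δ (X (Sum.inr (i, 0))) = 0)
    (hv1 : ∀ i, δ (X (Sum.inr (i, 1))) = X (Sum.inr (i, 0))) :
    IsTwoStepBasic δ (Sum.map (·, 1) (·, 1)) (Sum.map (·, 0) (·, 0)) where
  map_X_left := by simp [hu1, hv1]
  map_X_of_notMem := by
    rintro (⟨i, j⟩ | ⟨i, j⟩) hs <;> fin_cases j <;> simp_all
  right_notMem := by simp
  right_injective := Sum.map_injective.2 ⟨Prod.mk_left_injective 0, Prod.mk_left_injective 0⟩

end Polynomial

section Module

variable {R A τ : Type*} [CommRing R] [CommRing A] [Algebra R A]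

/-- The map from `τ → A` to the free module with basis `a (i, 0), a (i, 1)`, `i : τ`, which sends
`f` to `∑ i, (f i • a (i, 0) - δ (f i) • a (i, 1))`. It parametrizes the kernel of an extension of
`δ` in the sense of `IsTwoStepExtension` by families in `ker δ²`. -/
def twoStepLift (δ : Derivation R A A) : (τ → A) →ₗ[constants δ] (τ × Fin 2 → A) :=
  LinearMap.pi fun p =>
    (if p.2 = 0 then LinearMap.id else -constantsLinearMap δ) ∘ₗ LinearMap.proj p.1

variable [DecidableEq τ]

/-- The map `D` on the free module with basis `a (i, 0), a (i, 1)`, `i : τ`, extends the derivation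
`δ` of the coefficients by `D (a (i, 0)) = 0` and `D (a (i, 1)) = a (i, 0)`. -/
structure IsTwoStepExtension (δ : Derivation R A A)
    (D : (τ × Fin 2 → A) →ₗ[R] (τ × Fin 2 → A)) : Prop where
  map_zero_basis (f : A) (i : τ) :
    D (f • Pi.single (i, 0) 1) = δ f • Pi.single (i, 0) 1
  map_one_basis (f : A) (i : τ) :
    D (f • Pi.single (i, 1) 1) = δ f • Pi.single (i, 1) 1 + f • Pi.single (i, 0) 1

namespace IsTwoStepExtension

variable {δ : Derivation R A A} {D : (τ × Fin 2 → A) →ₗ[R] (τ × Fin 2 → A)}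

theorem map_eq_sum [Fintype τ] (hD : IsTwoStepExtension δ D) (m : τ × Fin 2 → A) :
    D m = ∑ i, (Pi.single (i, 0) (δ (m (i, 0)) + m (i, 1)) + Pi.single (i, 1) (δ (m (i, 1)))) := by
  have hsingle (p : τ × Fin 2) (f : A) : Pi.single p f = f • Pi.single p (1 : A) := by
    rw [← Pi.single_smul, smul_eq_mul, mul_one]
  conv_lhs => rw [← Finset.univ_sum_single m, Fintype.sum_prod_type, map_sum]
  refine Finset.sum_congr rfl fun i _ => ?_
  simp only [Fin.sum_univ_two, map_add, hsingle _ (m _), hD.map_zero_basis, hD.map_one_basis]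
  simp only [← hsingle, Pi.single_add]
  abel

theorem map_apply_zero [Finite τ] (hD : IsTwoStepExtension δ D) (m : τ × Fin 2 → A) (i : τ) :
    D m (i, 0) = δ (m (i, 0)) + m (i, 1) := by
  have := Fintype.ofFinite τ
  simp [hD.map_eq_sum, Pi.single_apply]

theorem map_apply_one [Finite τ] (hD : IsTwoStepExtension δ D) (m : τ × Fin 2 → A) (i : τ) :
    D m (i, 1) = δ (m (i, 1)) := by
  have := Fintype.ofFinite τ
  simp [hD.map_eq_sum, Pi.single_apply]

theorem map_eq_zero_iff_forall [Finite τ] (hD : IsTwoStepExtension δ D) (m : τ × Fin 2 → A) :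
    D m = 0 ↔ ∀ i, m (i, 1) = -δ (m (i, 0)) ∧ δ (δ (m (i, 0))) = 0 := by
  rw [funext_iff, Prod.forall]
  refine forall_congr' fun i => ?_
  rw [Fin.forall_fin_two, hD.map_apply_zero, hD.map_apply_one, Pi.zero_apply, Pi.zero_apply,
    add_eq_zero_iff_neg_eq, eq_comm (b := m (i, 1)), and_congr_right_iff]
  intro hi
  rw [hi, map_neg, neg_eq_zero]

theorem map_eq_zero_iff_mem_map [Finite τ] (hD : IsTwoStepExtension δ D) (m : τ × Fin 2 → A) :
    D m = 0 ↔ m ∈ (Submodule.pi Set.univ fun _ : τ =>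
      LinearMap.ker (constantsLinearMap δ ∘ₗ constantsLinearMap δ)).map (twoStepLift δ) := by
  rw [hD.map_eq_zero_iff_forall]
  constructor
  · intro hm
    refine ⟨fun i => m (i, 0), fun i _ => (hm i).2, ?_⟩
    ext ⟨i, j⟩ : 1
    fin_cases j
    · rfl
    · exact (hm i).1.symm
  · rintro ⟨f, hf, rfl⟩ i
    exact ⟨rfl, hf i trivial⟩

theorem exists_generators [Finite τ] (hD : IsTwoStepExtension δ D)
    (hfg : (LinearMap.ker (constantsLinearMap δ ∘ₗ constantsLinearMap δ)).FG) :
    ∃ (k : ℕ) (g : Fin k → τ × Fin 2 → A), ∀ m : τ × Fin 2 → A,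
      D m = 0 ↔ ∃ c : Fin k → A, (∀ l, δ (c l) = 0) ∧ m = ∑ l, c l • g l := by
  obtain ⟨k, g, hg⟩ := Submodule.fg_iff_exists_fin_generating_family.1
    ((Submodule.fg_pi fun _ => hfg).map (twoStepLift (τ := τ) δ))
  refine ⟨k, g, fun m => ?_⟩
  rw [hD.map_eq_zero_iff_mem_map, ← hg, Submodule.mem_span_range_iff_exists_fun]
  constructor
  · rintro ⟨c, rfl⟩
    exact ⟨fun l => c l, fun l => (c l).2, rfl⟩
  · rintro ⟨c, hc, rfl⟩
    exact ⟨fun l => ⟨c l, hc l⟩, rfl⟩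

end IsTwoStepExtension

end Module

theorem stmt8_general {R σ J τ : Type*} [CommRing R] [Algebra ℚ R] [Finite J] [Finite τ]
    [DecidableEq τ] {δ : Derivation R (MvPolynomial σ R) (MvPolynomial σ R)} {x y : J → σ}
    (hδ : IsTwoStepBasic δ x y)
    {D : (τ × Fin 2 → MvPolynomial σ R) →ₗ[R] (τ × Fin 2 → MvPolynomial σ R)}
    (hD : IsTwoStepExtension δ D) :
    ∃ (k : ℕ) (g : Fin k → τ × Fin 2 → MvPolynomial σ R), ∀ m : τ × Fin 2 → MvPolynomial σ R,
      D m = 0 ↔ ∃ c : Fin k → MvPolynomial σ R, (∀ l, δ (c l) = 0) ∧ m = ∑ l, c l • g l :=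
  hD.exists_generators hδ.fg_ker_sq

/-- `M^δ = ker D` is a finitely generated module over `S^δ = ker δ_S`, where `D` is the
`K`-linear map on `M` with `D(f·a_{2i-1}) = δ_S(f)·a_{2i-1}` and
`D(f·a_{2i}) = δ_S(f)·a_{2i} + f·a_{2i-1}`. -/
theorem stmt8 (K : Type) [Field K] [CharZero K] (d : ℕ) (hd : 1 ≤ d)
    (δS : Derivation K (S K d) (S K d))
    (hSu0 : ∀ i : Fin d, δS (X (Sum.inl (i, 0))) = 0)
    (hSu1 : ∀ i : Fin d, δS (X (Sum.inl (i, 1))) = X (Sum.inl (i, 0)))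
    (hSv0 : ∀ i : Fin d, δS (X (Sum.inr (i, 0))) = 0)
    (hSv1 : ∀ i : Fin d, δS (X (Sum.inr (i, 1))) = X (Sum.inr (i, 0)))
    (D : M K d →ₗ[K] M K d)
    (hD0 : ∀ (f : S K d) (i : Fin d),
      D (f • a K d (i, 0)) = δS f • a K d (i, 0))
    (hD1 : ∀ (f : S K d) (i : Fin d),
      D (f • a K d (i, 1)) = δS f • a K d (i, 1) + f • a K d (i, 0)) :
    ∃ (k : ℕ) (g : Fin k → M K d),
      ∀ m : M K d,
        D m = 0 ↔ ∃ c : Fin k → S K d, (∀ l, δS (c l) = 0) ∧ m = ∑ l, c l • g l := by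
  exact stmt8_general (isTwoStepBasic_sum_prod hSu0 hSu1 hSv0 hSv1) ⟨hD0, hD1⟩

end Stmt8
end

section
/- For all a, b, c, e ∈ A one has [a,b][c,e] = −[a,c][b,e]. -/
section NonUnitalRing

variable {A : Type*} [NonUnitalRing A]

theorem lie_mul (a b c : A) : ⁅a, b * c⁆ = ⁅a, b⁆ * c + b * ⁅a, c⁆ := by
  simp only [Ring.lie_def, sub_mul, mul_sub, mul_assoc]
  abel

theorem mul_lie (a b c : A) : ⁅a * b, c⁆ = a * ⁅b, c⁆ + ⁅a, c⁆ * b := by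
  simp only [Ring.lie_def, sub_mul, mul_sub, mul_assoc]
  abel

theorem lie_mul_lie_add_lie_mul_lie_eq_zero {a b c e : A} (hab : ⁅⁅a, b⁆, e⁆ = 0)
    (hac : ⁅⁅a, c⁆, e⁆ = 0) (habc : ⁅⁅a, b * c⁆, e⁆ = 0) :
    ⁅a, b⁆ * ⁅c, e⁆ + ⁅b, e⁆ * ⁅a, c⁆ = 0 :=
  calc ⁅a, b⁆ * ⁅c, e⁆ + ⁅b, e⁆ * ⁅a, c⁆
    _ = ⁅⁅a, b⁆ * c, e⁆ + ⁅b * ⁅a, c⁆, e⁆ := by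
      rw [mul_lie, mul_lie, hab, hac, zero_mul, mul_zero, add_zero, zero_add]
    _ = ⁅⁅a, b⁆ * c + b * ⁅a, c⁆, e⁆ := by
      simp only [Ring.lie_def, add_mul, mul_add]
      abel
    _ = ⁅⁅a, b * c⁆, e⁆ := by rw [lie_mul]
    _ = 0 := habc

theorem stmt12_general (h : ∀ a b c : A, ⁅⁅a, b⁆, c⁆ = 0) (a b c e : A) :
    ⁅a, b⁆ * ⁅c, e⁆ = -(⁅a, c⁆ * ⁅b, e⁆) := by
  have hcomm : Commute ⁅a, c⁆ ⁅b, e⁆ := commute_iff_lie_eq.mpr (h a c ⁅b, e⁆)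
  rw [hcomm.eq]
  exact eq_neg_of_add_eq_zero_left
    (lie_mul_lie_add_lie_mul_lie_eq_zero (h a b e) (h a c e) (h a (b * c) e))

end NonUnitalRing

/-- In a unital associative `K`-algebra `A` (over a field `K` of characteristic `0`) in
which `[[a,b],c] = 0` for all `a, b, c` (where `[a,b] = ab - ba`), one has
`[a,b][c,e] = -[a,c][b,e]` for all `a, b, c, e ∈ A`. -/
theorem stmt12 (K : Type*) [Field K] [CharZero K] (A : Type*) [Ring A] [Algebra K A]
    (h : ∀ a b c : A, (a * b - b * a) * c - c * (a * b - b * a) = 0) :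
    ∀ a b c e : A,
      (a * b - b * a) * (c * e - e * c) = -((a * c - c * a) * (b * e - e * b)) :=
  stmt12_general h
end

section
/- For every s ≥ d, every element of W_s and every element of Z_s is equal to 0 in F. -/
namespace Stmt15

/-- The relation imposing the identity `[[a,b],c] = 0` (commutators are central) on the
free unital associative algebra; the quotient `RingQuot` by it is the relatively free
algebra of rank `2d` of the variety generated by the infinite-dimensional Grassmann
algebra.  The generator `Sum.inl i` is `x_{i+1}` and `Sum.inr i` is `y_{i+1}`. -/
def grRel (K : Type) [Field K] (d : ℕ) :
    FreeAlgebra K (Fin d ⊕ Fin d) → FreeAlgebra K (Fin d ⊕ Fin d) → Prop := fun p q =>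
  q = 0 ∧ ∃ a b c : FreeAlgebra K (Fin d ⊕ Fin d),
    p = (a * b - b * a) * c - c * (a * b - b * a)

/-- The relatively free algebra `F = F_{2d}(𝒢)`. -/
abbrev F (K : Type) [Field K] (d : ℕ) : Type := RingQuot (grRel K d)

/-- The generator `x_i` of `F`. -/
noncomputable def x (K : Type) [Field K] (d : ℕ) (i : Fin d) : F K d :=
  RingQuot.mkAlgHom K (grRel K d) (FreeAlgebra.ι K (Sum.inl i))

/-- The generator `y_i` of `F`. -/
noncomputable def y (K : Type) [Field K] (d : ℕ) (i : Fin d) : F K d :=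
  RingQuot.mkAlgHom K (grRel K d) (FreeAlgebra.ι K (Sum.inr i))

/-- `v_{ij} = x_i y_j - y_i x_j`. -/
noncomputable def v (K : Type) [Field K] (d : ℕ) (i j : Fin d) : F K d :=
  x K d i * y K d j - y K d i * x K d j

/-- `w_{ijk} = y_i [x_j, x_k] - x_i [y_j, x_k]`. -/
noncomputable def w (K : Type) [Field K] (d : ℕ) (i j k : Fin d) : F K d :=
  y K d i * (x K d j * x K d k - x K d k * x K d j) -
    x K d i * (y K d j * x K d k - x K d k * y K d j)

/-- `z_{ijkl} = y_i [x_j, v_{kl}] - x_i [y_j, v_{kl}]`. -/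
noncomputable def z (K : Type) [Field K] (d : ℕ) (i j k l : Fin d) : F K d :=
  y K d i * (x K d j * v K d k l - v K d k l * x K d j) -
    x K d i * (y K d j * v K d k l - v K d k l * y K d j)

/-- The set `V = {v_{ij} : 1 ≤ i, j ≤ d}`. -/
def Vset (K : Type) [Field K] (d : ℕ) : Set (F K d) :=
  {f | ∃ i j : Fin d, f = v K d i j}

/-- The sets `W_s`: `W_0 = {w_{ijk} : i ≤ j ≤ k}` and
`W_s = {y_i [x_j, w] - x_i [y_j, w] : w ∈ W_{s-1}}` for `s ≥ 1`. -/
def Wset (K : Type) [Field K] (d : ℕ) : ℕ → Set (F K d)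
  | 0 => {f | ∃ i j k : Fin d, i ≤ j ∧ j ≤ k ∧ f = w K d i j k}
  | s + 1 => {f | ∃ g ∈ Wset K d s, ∃ i j : Fin d,
      f = y K d i * (x K d j * g - g * x K d j) -
        x K d i * (y K d j * g - g * y K d j)}

/-- The sets `Z_s`: `Z_0 = {z_{ijkl} : i ≤ j ≤ k ≤ l}` and
`Z_s = {y_i [x_j, z] - x_i [y_j, z] : z ∈ Z_{s-1}}` for `s ≥ 1`. -/
def Zset (K : Type) [Field K] (d : ℕ) : ℕ → Set (F K d)
  | 0 => {f | ∃ i j k l : Fin d, i ≤ j ∧ j ≤ k ∧ k ≤ l ∧ f = z K d i j k l}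
  | s + 1 => {f | ∃ g ∈ Zset K d s, ∃ i j : Fin d,
      f = y K d i * (x K d j * g - g * x K d j) -
        x K d i * (y K d j * g - g * y K d j)}

/-!
Commutators of `F` are central, and expanding `[[a, ba], c] = 0` with `[a, ba] = [a, b] a` gives
`[a, b] [a, c] = 0`. Hence a product of commutators of generators in which a generator is repeated
vanishes; as there are only `2d` generators, every product of more than `d` such commutators is
zero.

Let `I` be the ideal of the centre generated by the commutators of generators. All commutators of
`F` lie in `I F`, and `[u, ·]` is linear over the centre, so it maps `I ^ n F` to `I ^ (n + 1) F`.
Therefore `W_s` and `Z_s` lie in `I ^ (s + 1) F`, which is zero for `s ≥ d`.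
-/

section CentralCommutators

attribute [local instance] LieRing.ofAssociativeRing

variable {A ι : Type*} [Ring A]

lemma lie_mul_lie_eq_zero (hA : ∀ a b : A, ⁅a, b⁆ ∈ Subring.center A) (a b c : A) :
    ⁅a, b⁆ * ⁅a, c⁆ = 0 := by
  have lie_lie_eq_zero (u v w : A) : ⁅⁅u, v⁆, w⁆ = 0 :=
    sub_eq_zero.2 (Subring.mem_center_iff.1 (hA u v) w).symm
  calc ⁅a, b⁆ * ⁅a, c⁆ = ⁅⁅a, b * a⁆, c⁆ - ⁅⁅a, b⁆, c⁆ * a := by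
        simp only [Ring.lie_def]; noncomm_ring
    _ = 0 := by rw [lie_lie_eq_zero, lie_lie_eq_zero, zero_mul, sub_zero]

lemma lie_mul_lie_eq_zero_of_exists_eq (hA : ∀ a b : A, ⁅a, b⁆ ∈ Subring.center A)
    {p q : Fin 2 → A} (hpq : ∃ k l, p k = q l) : ⁅p 0, p 1⁆ * ⁅q 0, q 1⁆ = 0 := by
  simp only [Fin.exists_fin_two] at hpq
  rcases hpq with (h | h) | (h | h)
  · rw [h, lie_mul_lie_eq_zero hA]
  · rw [h, ← lie_skew (q 0), mul_neg, lie_mul_lie_eq_zero hA, neg_zero]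
  · rw [h, ← lie_skew (p 0), neg_mul, lie_mul_lie_eq_zero hA, neg_zero]
  · rw [h, ← lie_skew (p 0), ← lie_skew (q 0), neg_mul_neg, lie_mul_lie_eq_zero hA]

lemma prod_lie_eq_zero_of_card_lt [Fintype ι] (hA : ∀ a b : A, ⁅a, b⁆ ∈ Subring.center A)
    (g : ι → A) {n : ℕ} (hn : Fintype.card ι < 2 * n) (letter : Fin n → Fin 2 → ι)
    (c : Fin n → Subring.center A) (hc : ∀ m, (c m : A) = ⁅g (letter m 0), g (letter m 1)⁆) :
    ∏ m, c m = 0 := by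
  obtain ⟨⟨m, k⟩, ⟨m', l⟩, hne, heq⟩ :=
    Fintype.exists_ne_map_eq_of_card_lt (fun p : Fin n × Fin 2 => letter p.1 p.2)
      (by simpa [mul_comm] using hn)
  obtain rfl | hm := eq_or_ne m m'
  · have letter_eq : letter m 0 = letter m 1 := by
      fin_cases k <;> fin_cases l <;> simp_all
    have factor_eq_zero : c m = 0 :=
      Subtype.ext (by rw [hc, letter_eq, lie_self, ZeroMemClass.coe_zero])
    exact Finset.prod_eq_zero (Finset.mem_univ m) factor_eq_zero
  · have pair_eq_zero : c m * c m' = 0 := Subtype.ext <| by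
      rw [Subring.coe_mul, hc, hc, ZeroMemClass.coe_zero]
      exact lie_mul_lie_eq_zero_of_exists_eq hA (p := g ∘ letter m) (q := g ∘ letter m')
        ⟨k, l, congrArg g heq⟩
    have pair_dvd : c m * c m' ∣ ∏ m, c m :=
      Finset.prod_pair (f := c) hm ▸ Finset.prod_dvd_prod_of_subset _ _ c (Finset.subset_univ _)
    exact zero_dvd_iff.1 (pair_eq_zero ▸ pair_dvd)

/-- The ideal of the centre of `A` generated by the commutators `[g i, g j]`. It is meant for rings
whose commutators are central; in general, the commutators that are not central are left out. -/
def commutatorIdeal (g : ι → A) : Ideal (Subring.center A) :=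
  Ideal.span {c | ∃ i j, (c : A) = ⁅g i, g j⁆}

/-- The descending filtration `I ^ n A`, where `I` is `commutatorIdeal g`; its `n`-th term plays the
role of the span of the products with at least `n` commutators. -/
def commutatorFiltration (g : ι → A) (n : ℕ) : Submodule (Subring.center A) A :=
  commutatorIdeal g ^ n • ⊤

lemma commutatorIdeal_pow_eq_bot [Fintype ι] (hA : ∀ a b : A, ⁅a, b⁆ ∈ Subring.center A)
    (g : ι → A) {n : ℕ} (hn : Fintype.card ι < 2 * n) : commutatorIdeal g ^ n = ⊥ := by
  rw [commutatorIdeal, Ideal.span, Submodule.span_pow, Submodule.span_eq_bot]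
  intro c hc
  obtain ⟨f, rfl⟩ := Set.mem_pow.1 hc
  choose i j hij using fun m => (f m).2
  rw [List.prod_ofFn]
  exact prod_lie_eq_zero_of_card_lt hA g hn (fun m => ![i m, j m]) _ hij

lemma commutatorFiltration_eq_bot [Fintype ι] (hA : ∀ a b : A, ⁅a, b⁆ ∈ Subring.center A)
    (g : ι → A) {n : ℕ} (hn : Fintype.card ι < 2 * n) : commutatorFiltration g n = ⊥ := by
  rw [commutatorFiltration, commutatorIdeal_pow_eq_bot hA g hn, Submodule.bot_smul]

lemma commutatorFiltration_zero (g : ι → A) : commutatorFiltration g 0 = ⊤ := by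
  rw [commutatorFiltration, pow_zero, Ideal.one_eq_top, Submodule.top_smul]

lemma commutatorFiltration_succ (g : ι → A) (n : ℕ) :
    commutatorFiltration g (n + 1) = commutatorIdeal g ^ n • commutatorFiltration g 1 := by
  rw [commutatorFiltration, commutatorFiltration, pow_one, pow_succ, mul_smul]

lemma mul_mem_commutatorFiltration {g : ι → A} {n : ℕ} {a : A} (b : A)
    (ha : a ∈ commutatorFiltration g n) : b * a ∈ commutatorFiltration g n :=
  Submodule.smul_top_le_comap_smul_top _ (LinearMap.mulLeft _ b) ha

lemma mul_mem_commutatorFiltration_right {g : ι → A} {n : ℕ} {a : A} (b : A)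
    (ha : a ∈ commutatorFiltration g n) : a * b ∈ commutatorFiltration g n :=
  Submodule.smul_top_le_comap_smul_top _ (LinearMap.mulRight _ b) ha

lemma lie_apply_mem_commutatorFiltration_one (hA : ∀ a b : A, ⁅a, b⁆ ∈ Subring.center A)
    (g : ι → A) (i j : ι) : ⁅g i, g j⁆ ∈ commutatorFiltration g 1 := by
  have hmem : (⟨⁅g i, g j⁆, hA _ _⟩ : Subring.center A) ∈ commutatorIdeal g ^ 1 := by
    rw [pow_one]
    exact Ideal.subset_span ⟨i, j, rfl⟩
  have hsmul := Submodule.smul_mem_smul hmem (Submodule.mem_top (x := (1 : A)))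
  rwa [Subring.smul_def, smul_eq_mul, mul_one] at hsmul

section Generators

variable {R : Type*} [CommSemiring R] [Algebra R A] {g : ι → A}

lemma lie_mem_commutatorFiltration_one_of_forall_apply
    (hg : Algebra.adjoin R (Set.range g) = ⊤) {a : A}
    (ha : ∀ i, ⁅a, g i⁆ ∈ commutatorFiltration g 1) (b : A) :
    ⁅a, b⁆ ∈ commutatorFiltration g 1 := by
  have hb : b ∈ Algebra.adjoin R (Set.range g) := hg ▸ Algebra.mem_top
  induction hb using Algebra.adjoin_induction with
  | mem _ h =>
    obtain ⟨i, rfl⟩ := h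
    exact ha i
  | algebraMap r =>
    rw [Ring.lie_def, ← Algebra.commutes, sub_self]
    exact zero_mem _
  | add b c _ _ hb hc =>
    rw [lie_add]
    exact add_mem hb hc
  | mul b c _ _ hb hc =>
    have leibniz : ⁅a, b * c⁆ = ⁅a, b⁆ * c + b * ⁅a, c⁆ := by
      simp only [Ring.lie_def]; noncomm_ring
    rw [leibniz]
    exact add_mem (mul_mem_commutatorFiltration_right c hb) (mul_mem_commutatorFiltration b hc)

lemma lie_mem_commutatorFiltration_one (hA : ∀ a b : A, ⁅a, b⁆ ∈ Subring.center A)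
    (hg : Algebra.adjoin R (Set.range g) = ⊤) (a b : A) : ⁅a, b⁆ ∈ commutatorFiltration g 1 := by
  refine lie_mem_commutatorFiltration_one_of_forall_apply hg (fun i => ?_) b
  rw [← lie_skew, neg_mem_iff]
  exact lie_mem_commutatorFiltration_one_of_forall_apply hg
    (lie_apply_mem_commutatorFiltration_one hA g i) a

lemma lie_mem_commutatorFiltration_succ (hA : ∀ a b : A, ⁅a, b⁆ ∈ Subring.center A)
    (hg : Algebra.adjoin R (Set.range g) = ⊤) {n : ℕ} {a : A}
    (ha : a ∈ commutatorFiltration g n) (u : A) : ⁅u, a⁆ ∈ commutatorFiltration g (n + 1) := by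
  have hmap : (commutatorFiltration g n).map (LieAlgebra.ad (Subring.center A) A u) ≤
      commutatorFiltration g (n + 1) := by
    rw [commutatorFiltration, Submodule.map_smul'', commutatorFiltration_succ]
    refine Submodule.smul_mono le_rfl ?_
    rintro _ ⟨b, -, rfl⟩
    exact lie_mem_commutatorFiltration_one hA hg u b
  exact hmap (Submodule.mem_map_of_mem ha)

end Generators

end CentralCommutators

section RelativelyFree

variable (K : Type) [Field K] (d : ℕ)

/-- The generators of `F`: the `x_i` on the left summand, the `y_i` on the right one. -/
noncomputable def gen : Fin d ⊕ Fin d → F K d :=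
  RingQuot.mkAlgHom K (grRel K d) ∘ FreeAlgebra.ι K

lemma adjoin_range_gen : Algebra.adjoin K (Set.range (gen K d)) = ⊤ := by
  rw [gen, Set.range_comp, ← AlgHom.map_adjoin, FreeAlgebra.adjoin_range_ι, Algebra.map_top,
    AlgHom.range_eq_top]
  exact RingQuot.mkAlgHom_surjective K _

variable {K d}

lemma lie_mem_center (a b : F K d) : ⁅a, b⁆ ∈ Subring.center (F K d) := by
  refine Subring.mem_center_iff.2 fun c => ?_
  obtain ⟨a, rfl⟩ := RingQuot.mkAlgHom_surjective K (grRel K d) a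
  obtain ⟨b, rfl⟩ := RingQuot.mkAlgHom_surjective K (grRel K d) b
  obtain ⟨c, rfl⟩ := RingQuot.mkAlgHom_surjective K (grRel K d) c
  have lie_lie_eq_zero := RingQuot.mkAlgHom_rel K
    (show grRel K d ((a * b - b * a) * c - c * (a * b - b * a)) 0 from ⟨rfl, a, b, c, rfl⟩)
  simp only [map_sub, map_mul, map_zero] at lie_lie_eq_zero
  exact (sub_eq_zero.1 lie_lie_eq_zero).symm

lemma mul_lie_sub_mul_lie_mem_commutatorFiltration {n : ℕ} {f : F K d}
    (hf : f ∈ commutatorFiltration (gen K d) n) (i j : Fin d) :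
    y K d i * ⁅x K d j, f⁆ - x K d i * ⁅y K d j, f⁆ ∈ commutatorFiltration (gen K d) (n + 1) :=
  have lie_mem (u : F K d) :=
    lie_mem_commutatorFiltration_succ lie_mem_center (adjoin_range_gen K d) hf u
  sub_mem (mul_mem_commutatorFiltration _ (lie_mem _)) (mul_mem_commutatorFiltration _ (lie_mem _))

lemma mul_lie_sub_mul_lie_mem_commutatorFiltration_one (f : F K d) (i j : Fin d) :
    y K d i * ⁅x K d j, f⁆ - x K d i * ⁅y K d j, f⁆ ∈ commutatorFiltration (gen K d) 1 :=
  mul_lie_sub_mul_lie_mem_commutatorFiltration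
    (commutatorFiltration_zero (gen K d) ▸ Submodule.mem_top) i j

variable (K d)

lemma Wset_subset_commutatorFiltration (s : ℕ) :
    Wset K d s ⊆ commutatorFiltration (gen K d) (s + 1) := by
  induction s with
  | zero =>
    rintro _ ⟨i, j, k, -, -, rfl⟩
    exact mul_lie_sub_mul_lie_mem_commutatorFiltration_one (x K d k) i j
  | succ s ih =>
    rintro _ ⟨f, hf, i, j, rfl⟩
    exact mul_lie_sub_mul_lie_mem_commutatorFiltration (ih hf) i j

lemma Zset_subset_commutatorFiltration (s : ℕ) :
    Zset K d s ⊆ commutatorFiltration (gen K d) (s + 1) := by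
  induction s with
  | zero =>
    rintro _ ⟨i, j, k, l, -, -, -, rfl⟩
    exact mul_lie_sub_mul_lie_mem_commutatorFiltration_one (v K d k l) i j
  | succ s ih =>
    rintro _ ⟨f, hf, i, j, rfl⟩
    exact mul_lie_sub_mul_lie_mem_commutatorFiltration (ih hf) i j

end RelativelyFree

theorem stmt15_general (K : Type) [Field K] (d s : ℕ) (hs : d ≤ s) :
    (∀ f ∈ Wset K d s, f = 0) ∧ (∀ f ∈ Zset K d s, f = 0) := by
  have filtration_eq_bot : commutatorFiltration (gen K d) (s + 1) = ⊥ :=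
    commutatorFiltration_eq_bot lie_mem_center _ (by
      rw [Fintype.card_sum, Fintype.card_fin]
      lia)
  have eq_zero {f : F K d} (hf : f ∈ commutatorFiltration (gen K d) (s + 1)) : f = 0 :=
    (Submodule.mem_bot _).1 (filtration_eq_bot ▸ hf)
  exact ⟨fun _ hf => eq_zero (Wset_subset_commutatorFiltration K d s hf),
    fun _ hf => eq_zero (Zset_subset_commutatorFiltration K d s hf)⟩

/-- For every `s ≥ d`, every element of `W_s` and every element of `Z_s` is `0` in
`F`. -/
theorem stmt15 (K : Type) [Field K] [CharZero K] (d : ℕ) (hd : 1 ≤ d)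
    (s : ℕ) (hs : d ≤ s) :
    (∀ f ∈ Wset K d s, f = 0) ∧ (∀ f ∈ Zset K d s, f = 0) :=
  stmt15_general K d s hs

end Stmt15
end
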